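/- Fix integers p ≥ 1, d₁, d₂, d_v ≥ 1. Let 𝒱 ⊆ ℝ^{d_v}, let μ_v be a measure on ℝ^{d_v} with μ_v(ℝ^{d_v} ∖ 𝒱) = 0, and let (z*, v*) ∈ ℝ^{d₂} × 𝒱 be such that μ_v assigns strictly positive measure to every open neighbourhood of v*. Suppose: f₀ : ℝ^p → ℝ^p is a locally Lipschitz bijection with f₀(0) = 0, locally Lipschitz inverse, and det Df₀(z) ≠ 0 at Lebesgue-almost every z; for every (z⁽²⁾, v) ∈ ℝ^{d₂} × 𝒱, the map z⁽¹⁾ ↦ f̄₁(z⁽¹⁾, z⁽²⁾, v) from ℝ^{d₁} to ℝ^p is locally Lipschitz, surjective, with rank D_{z⁽¹⁾} f̄₁(z⁽¹⁾, z⁽²⁾, v) = p at almost every z⁽¹⁾; ρ is an admissible density on ℝ^p satisfying the local-maximum condition; σ : ℝ^{d₂} × ℝ^{d_v} → ℝ^{p×p} takes values in diagonal matrices with strictly positive diagonal entries, σ(z*, v*) = I_p, and σ is continuous at (z*, v*). Let f̃₀ be any locally Lipschitz bijection ℝ^p → ℝ^p with f̃₀(0) = 0 and det Df̃₀(z) ≠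 0 almost everywhere, and let f̃₁ : ℝ^{d₁} × ℝ^{d₂} × ℝ^{d_v} → ℝ^p be such that z⁽¹⁾ ↦ f̃₁(z⁽¹⁾, z⁽²⁾, v) is locally Lipschitz for every (z⁽²⁾, v). Then there exist σ̃ taking values in diagonal matrices with strictly positive entries, with σ̃(z*, v*) = I_p and σ̃ continuous at (z*, v*), and an admissible density ρ̃ on ℝ^p, such that for (Lebesgue ⊗ μ_v)-almost every (z⁽²⁾, v), ρ(σ(z⁽²⁾, v)⁻¹(f₀(ξ) − f̄₁(ξ̄, z⁽²⁾, v)))·|det(σ(z⁽²⁾, v)⁻¹ Df₀(ξ))| = ρ̃(σ̃(z⁽²⁾, v)⁻¹(f̃₀(ξ) − f̃₁(ξ̄, z⁽²⁾, v)))·|det(σ̃(z⁽²⁾, v)⁻¹ Df̃₀(ξ))| for Lebesgue-almost every (ξ, ξ̄) ∈ ℝ^p × ℝ^{d₁}, if and only if there exists Q ∈ O(p) such that for (Lebesgue ⊗ μ_v)-almost every (z⁽²⁾, v): f̃₀(z) = Q f₀(z) for all z ∈ ℝ^p, f̃₁(z⁽¹⁾, z⁽²⁾, v) = Q f̄₁(z⁽¹⁾,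 z⁽²⁾, v) for all z⁽¹⁾ ∈ ℝ^{d₁}, and Q σ(z⁽²⁾, v)² Qᵀ is a diagonal matrix; moreover, in that case σ̃(z⁽²⁾, v)² = Q σ(z⁽²⁾, v)² Qᵀ almost everywhere. -/

import Mathlib

open MeasureTheory Matrix

noncomputable section

/-- `E n` is Euclidean space `ℝ^n`. -/
abbrev E (n : ℕ) : Type := EuclideanSpace ℝ (Fin n)

/-- Action of a matrix on a Euclidean vector. -/
def mulVecE {m n : ℕ} (A : Matrix (Fin m) (Fin n) ℝ) (x : E n) : E m := WithLp.toLp 2 (A.mulVec x)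

/-- An admissible density on `ℝ^G`: continuously differentiable, everywhere strictly positive,
integrating to one, with zero mean and identity covariance (stated componentwise). -/
def AdmissibleDensity {G : ℕ} (ρ : E G → ℝ) : Prop :=
  ContDiff ℝ 1 ρ ∧ (∀ u, 0 < ρ u) ∧ ((∫ u, ρ u) = 1) ∧
    (∀ i, (∫ u : E G, u i * ρ u) = 0) ∧
    (∀ i j, (∫ u : E G, u i * u j * ρ u) = if i = j then 1 else 0)

/-- The local-maximum condition: `ρ` has a local maximum at some `u₀`, is twice continuously
differentiable in a neighbourhood of `u₀`, and has negative definite Hessian there. -/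
def LocalMaxCondition {G : ℕ} (ρ : E G → ℝ) : Prop :=
  ∃ u₀ : E G, IsLocalMax ρ u₀ ∧ ContDiffAt ℝ 2 ρ u₀ ∧
    ∀ v : E G, v ≠ 0 → iteratedFDeriv ℝ 2 ρ u₀ ![v, v] < 0

/-- A skedastic function on `ℝ^{d₂} × ℝ^{d_v}`: diagonal values with strictly positive diagonal
entries, equal to the identity at the normalisation point, and continuous there. -/
def SkedasticFn2 {p d₂ dv : ℕ} (σ : E d₂ × E dv → Matrix (Fin p) (Fin p) ℝ)
    (q0 : E d₂ × E dv) : Prop :=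
  (∀ q, (σ q).IsDiag) ∧ (∀ q i, 0 < σ q i i) ∧ σ q0 = 1 ∧ ContinuousAt σ q0

/-!
Fix `(z⁽²⁾, v)`. Since the two densities agree and the values of `f̄₁` exhaust `ℝᵖ`, there are maps
`g = f̃₀ ∘ f₀⁻¹` and `h`, with `f̃₁ = h ∘ f̄₁`, such that (after absorbing the scales)
`ρ (y - z) = ρ̃ (g y - h z) J(y)` for all `y` and `z`. A positive integrable density has no period,
and no translates escaping to infinity can converge to it; moreover its directional derivatives
cannot vanish identically. Hence `h` is continuous, then `C¹`, with invertible derivative.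

If `u₀` is a nondegenerate maximum of `ρ`, then `g (z + u₀) - h z` is a critical point of `ρ̃` that
is isolated and depends continuously on `z`, so it is constant. Thus `ρ (y - x + u₀)` depends only
on `g y - g x`, which makes `-D²ρ(u₀)` invariant under all `Dg(0)⁻¹ Dg(x)`: for this inner product
`Dg(0)⁻¹ ∘ g` is an isometry, and `g` is affine. The normalisations `f₀ 0 = f̃₀ 0 = 0`, zero mean
and identity covariance leave only `g = M` and `h = M` with `M` orthogonal.

Undoing the scales, `f̃₀ = G f₀` and `f̃₁ = G f̄₁` with `G = σ̃ M σ⁻¹` and `σ̃² = G σ² Gᵀ`. As `f₀`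
is onto, `G` does not depend on `(z⁽²⁾, v)`, and letting `(z⁽²⁾, v) → (z*, v*)` shows that it is
orthogonal. Conversely, `σ̃` is the diagonal square root of `Q σ² Qᵀ`, and `ρ̃ = ρ ∘ Qᵀ`.
-/

open Filter Topology Bornology Metric

section Translation

variable {F : Type*} [NormedAddCommGroup F] [MeasurableSpace F] [BorelSpace F]
  {μ : Measure F} [μ.IsAddHaarMeasure] {f : F → ℝ}

theorem tendsto_setLIntegral_comp_add_cobounded (hf : Measurable f) (hfi : Integrable f μ)
    {B : Set F} (hB : IsBounded B) (hBm : MeasurableSet B) {t : ℕ → F}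
    (ht : Tendsto t atTop (cobounded F)) :
    Tendsto (fun n => ∫⁻ u in B, ENNReal.ofReal (f (u + t n)) ∂μ) atTop (𝓝 0) := by
  let φ (n : ℕ) : F → ENNReal :=
    ((· - t n) ⁻¹' B).indicator fun w => ENNReal.ofReal (f w)
  have shift (n : ℕ) : ∫⁻ u in B, ENNReal.ofReal (f (u + t n)) ∂μ = ∫⁻ w, φ n w ∂μ := by
    rw [← lintegral_add_right_eq_self (φ n) (t n), ← lintegral_indicator hBm]
    exact lintegral_congr fun u => by by_cases hu : u ∈ B <;> simp [φ, hu]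
  have escape (w : F) : ∀ᶠ n in atTop, w - t n ∉ B :=
    ((tendsto_const_sub_cobounded w).comp ht).eventually (isBounded_def.1 hB)
  simp_rw [shift]
  rw [← lintegral_zero (μ := μ)]
  refine tendsto_lintegral_of_dominated_convergence (fun w => ENNReal.ofReal (f w))
    (fun n => ?_) (fun n => ae_of_all _ fun w => ?_) ?_ (ae_of_all _ fun w => ?_)
  · exact hf.ennreal_ofReal.indicator ((measurable_sub_const _) hBm)
  · exact Set.indicator_le_self _ _ w
  · exact hfi.lintegral_lt_top.ne
  · refine tendsto_const_nhds.congr' ?_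
    filter_upwards [escape w] with n hn
    simp [φ, hn]

theorem not_tendsto_cobounded_of_tendsto_comp_add (hf : Continuous f) (hpos : ∀ u, 0 < f u)
    (hfi : Integrable f μ) {t : ℕ → F}
    (ht : ∀ u, Tendsto (fun n => f (u + t n)) atTop (𝓝 (f u))) :
    ¬ Tendsto t atTop (cobounded F) := by
  intro hcob
  have fatou : ∫⁻ u in ball 0 1, ENNReal.ofReal (f u) ∂μ ≤ 0 := by
    rw [← (tendsto_setLIntegral_comp_add_cobounded hf.measurable hfi isBounded_ball
      measurableSet_ball hcob).liminf_eq]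
    refine le_of_eq_of_le (lintegral_congr fun u => ?_)
      (lintegral_liminf_le fun n => by fun_prop)
    exact (ENNReal.tendsto_ofReal (ht u)).liminf_eq.symm
  refine (setLIntegral_pos_iff (by fun_prop)).2 ?_ |>.not_ge fatou
  simpa [Function.support, (hpos _).not_ge] using measure_ball_pos μ (0 : F) one_pos

variable [NormedSpace ℝ F]

theorem eq_zero_of_forall_add_eq (hf : Continuous f) (hpos : ∀ u, 0 < f u)
    (hfi : Integrable f μ) {a : F} (ha : ∀ u, f (u + a) = f u) : a = 0 := by
  by_contra ha0
  have hper (n : ℕ) (u : F) : f (u + n • a) = f u := by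
    induction n with
    | zero => simp
    | succ n ih => rw [succ_nsmul, ← add_assoc, ha, ih]
  refine not_tendsto_cobounded_of_tendsto_comp_add (t := fun n => n • a) hf hpos hfi
    (fun u => by simp [hper]) ?_
  rw [← tendsto_norm_atTop_iff_cobounded]
  simpa [← Nat.cast_smul_eq_nsmul ℝ, norm_smul] using
    tendsto_natCast_atTop_atTop.atTop_mul_const (norm_pos_iff.2 ha0)

theorem eq_zero_of_forall_fderiv_apply_eq_zero (hf : Differentiable ℝ f) (hpos : ∀ u, 0 < f u)
    (hfi : Integrable f μ) {v : F} (hv : ∀ u, fderiv ℝ f u v = 0) : v = 0 := by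
  refine eq_zero_of_forall_add_eq hf.continuous hpos hfi fun u => ?_
  have hline (s : ℝ) : HasDerivAt (fun s : ℝ => f (u + s • v)) 0 s := by
    have := (hf (u + s • v)).hasFDerivAt.comp_hasDerivAt s
      (((hasDerivAt_id s).smul_const v).const_add u)
    simpa [Function.comp_def, hv] using this
  simpa using is_const_of_deriv_eq_zero (fun s => (hline s).differentiableAt)
    (fun s => (hline s).deriv) 1 0

theorem tendsto_zero_of_tendsto_comp_add [ProperSpace F] (hf : Continuous f)
    (hpos : ∀ u, 0 < f u) (hfi : Integrable f μ) {ι : Type*} {l : Filter ι}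
    [l.IsCountablyGenerated] {t : ι → F} (ht : ∀ u, Tendsto (fun i => f (u + t i)) l (𝓝 (f u))) :
    Tendsto t l (𝓝 0) := by
  refine tendsto_of_subseq_tendsto fun ns hns => ?_
  have hesc := not_tendsto_cobounded_of_tendsto_comp_add hf hpos hfi fun u => (ht u).comp hns
  obtain ⟨s, hs, hfreq⟩ : ∃ s : Set F, IsBounded s ∧ ∃ᶠ n in atTop, t (ns n) ∈ s := by
    simp only [Tendsto, le_def, not_forall, mem_map] at hesc
    obtain ⟨s, hs, hns⟩ := hesc
    exact ⟨sᶜ, isBounded_compl_iff.2 hs, fun h => hns (h.mono fun _ => not_not.1)⟩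
  obtain ⟨a, -, φ, hφ, hlim⟩ := tendsto_subseq_of_frequently_bounded hs hfreq
  refine ⟨φ, ?_⟩
  have hperiod (u : F) : f (u + a) = f u :=
    tendsto_nhds_unique ((hf.tendsto _).comp (hlim.const_add u))
      ((ht u).comp (hns.comp hφ.tendsto_atTop))
  rwa [eq_zero_of_forall_add_eq hf hpos hfi hperiod] at hlim

end Translation

section Calculus

variable {D F G H : Type*} [NormedAddCommGroup D] [NormedSpace ℝ D]
  [NormedAddCommGroup F] [NormedSpace ℝ F] [NormedAddCommGroup G] [NormedSpace ℝ G]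
  [NormedAddCommGroup H] [NormedSpace ℝ H]

theorem hasFDerivAt_bilinear_of_left_eq_zero (L : F →L[ℝ] G →L[ℝ] H) {c : D → F} {b : D → G}
    {c' : D →L[ℝ] F} {a : D} (hc : HasFDerivAt c c' a) (h0 : c a = 0) (hb : ContinuousAt b a) :
    HasFDerivAt (fun x => L (c x) (b x)) (L.flip (b a) ∘L c') a := by
  have hmain : HasFDerivAt (fun x => L (c x) (b a)) (L.flip (b a) ∘L c') a :=
    (L.flip (b a)).hasFDerivAt.comp a hc
  have hc_isBigO : c =O[𝓝 a] fun x => x - a := by simpa [h0] using hc.isBigO_sub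
  have hb_isLittleO : (fun x => b x - b a) =o[𝓝 a] fun _ => (1 : ℝ) :=
    (Asymptotics.isLittleO_one_iff ℝ).2 (by simpa using hb.tendsto.sub_const (b a))
  have hrem : HasFDerivAt (fun x => L (c x) (b x - b a)) (0 : D →L[ℝ] H) a := by
    refine .of_isLittleO (Asymptotics.isLittleO_norm_right.1 ?_)
    simpa [h0] using L.isBoundedBilinearMap.isBigO_comp.trans_isLittleO
      (hc_isBigO.norm_norm.mul_isLittleO hb_isLittleO.norm_left)
  refine ((hmain.add hrem).congr_fderiv (add_zero _)).congr_of_eventuallyEq ?_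
  exact .of_forall fun x => by simp

/- At a critical point `m a` of `ψ` the term involving `D²m` drops out, so `m` need only be `C¹`. -/
theorem fderiv_fderiv_comp_apply_of_fderiv_eq_zero {ψ : F → ℝ} {m : D → F} {a : D}
    (hψ : ContDiffAt ℝ 2 ψ (m a)) (hm : ContDiffAt ℝ 1 m a) (h0 : fderiv ℝ ψ (m a) = 0)
    (v w : D) :
    fderiv ℝ (fderiv ℝ (ψ ∘ m)) a v w =
      fderiv ℝ (fderiv ℝ ψ) (m a) (fderiv ℝ m a v) (fderiv ℝ m a w) := by
  have hchain : fderiv ℝ (ψ ∘ m) =ᶠ[𝓝 a] fun x => (fderiv ℝ ψ (m x)).comp (fderiv ℝ m x) := by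
    filter_upwards [hm.continuousAt.eventually (hψ.eventually (by simp)),
      hm.eventually (by simp)] with x hψx hmx
    exact fderiv_comp x (hψx.differentiableAt two_ne_zero) (hmx.differentiableAt one_ne_zero)
  have hψ' : HasFDerivAt (fderiv ℝ ψ) (fderiv ℝ (fderiv ℝ ψ) (m a)) (m a) :=
    ((hψ.fderiv_right (m := 1) le_rfl).differentiableAt one_ne_zero).hasFDerivAt
  have hprod := hasFDerivAt_bilinear_of_left_eq_zero (ContinuousLinearMap.compL ℝ D F ℝ)
    (hψ'.comp a (hm.differentiableAt one_ne_zero).hasFDerivAt) h0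
    (hm.fderiv_right (m := 0) le_rfl).continuousAt
  rw [(hprod.congr_of_eventuallyEq hchain).fderiv]
  rfl

theorem not_accPt_setOf_fderiv_eq_zero [FiniteDimensional ℝ F] {ψ : F → ℝ} {u : F}
    (hψ : ContDiffAt ℝ 2 ψ u) (hinj : ∀ v, fderiv ℝ (fderiv ℝ ψ) u v = 0 → v = 0) :
    ¬ AccPt u (𝓟 {x | fderiv ℝ ψ x = 0}) := by
  have hψ' : HasFDerivAt (fderiv ℝ ψ) (fderiv ℝ (fderiv ℝ ψ) u) u :=
    ((hψ.fderiv_right (m := 1) le_rfl).differentiableAt one_ne_zero).hasFDerivAt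
  obtain ⟨C, -, hC⟩ := LinearMap.exists_antilipschitzWith
    (fderiv ℝ (fderiv ℝ ψ) u : F →ₗ[ℝ] F →L[ℝ] ℝ) (LinearMap.ker_eq_bot'.2 hinj)
  rw [accPt_iff_frequently_nhdsNE, not_frequently]
  exact hψ'.eventually_ne ⟨C, hC⟩

theorem exists_finset_ker_eq_bot {K V ι : Type*} [Field K] [AddCommGroup V] [Module K V]
    [FiniteDimensional K V] (φ : ι → V →ₗ[K] K) (hφ : ∀ v, (∀ i, φ i v = 0) → v = 0) :
    ∃ s : Finset ι, LinearMap.ker (LinearMap.pi fun i : s => φ i) = ⊥ := by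
  obtain ⟨s, hs⟩ := Finset.exists_inf_le fun i => LinearMap.ker (φ i)
  refine ⟨s, LinearMap.ker_eq_bot'.2 fun v hv => hφ v fun i => ?_⟩
  refine hs i (Submodule.mem_finsetInf.2 fun j hj => ?_)
  exact congrFun hv ⟨j, hj⟩

theorem contDiffAt_of_forall_contDiffAt_comp [FiniteDimensional ℝ F] {ι : Type*}
    {φ : ι → F → ℝ} {h : D → F} {x : D} {n : WithTop ℕ∞} (hn : n ≠ 0)
    (hφ : ∀ i, ContDiffAt ℝ n (φ i) (h x))
    (hinj : ∀ v, (∀ i, fderiv ℝ (φ i) (h x) v = 0) → v = 0) (hh : ContinuousAt h x)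
    (hcomp : ∀ i, ContDiffAt ℝ n (φ i ∘ h) x) : ContDiffAt ℝ n h x := by
  obtain ⟨s, hs⟩ := exists_finset_ker_eq_bot
    (fun i => (fderiv ℝ (φ i) (h x) : F →ₗ[ℝ] ℝ)) hinj
  obtain ⟨P, hP⟩ := LinearMap.exists_leftInverse_of_injective _ hs
  let Ψ (y : F) : F := P.toContinuousLinearMap fun i : s => φ i y
  have hΨ : ContDiffAt ℝ n Ψ (h x) :=
    P.toContinuousLinearMap.contDiff.contDiffAt.comp _ (contDiffAt_pi.2 fun i => hφ i)
  have hΨ' : HasFDerivAt Ψ (ContinuousLinearEquiv.refl ℝ F : F →L[ℝ] F) (h x) := by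
    refine (P.toContinuousLinearMap.hasFDerivAt.comp (h x) (hasFDerivAt_pi.2 fun i : s =>
      ((hφ i).differentiableAt hn).hasFDerivAt)).congr_fderiv ?_
    ext v
    exact congr($hP v)
  have hΨh : ContDiffAt ℝ n (Ψ ∘ h) x :=
    P.toContinuousLinearMap.contDiff.contDiffAt.comp _ (contDiffAt_pi.2 fun i => hcomp i)
  refine ((hΨ.to_localInverse hΨ' hn).comp x hΨh).congr_of_eventuallyEq ?_
  have hleft := (hΨ.hasStrictFDerivAt' hΨ' hn).eventually_left_inverse
  filter_upwards [hh.eventually hleft] with y hy using hy.symm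

theorem apply_eq_of_forall_not_accPt {Z Y : Type*} [TopologicalSpace Z] [PreconnectedSpace Z]
    [TopologicalSpace Y] {K : Set Y} {u : Z → Y} (hu : Continuous u) (hK : ∀ z, u z ∈ K)
    (hacc : ∀ z, ¬ AccPt (u z) (𝓟 K)) (z z' : Z) : u z = u z' := by
  have hdiscrete : IsDiscrete (Set.range u) := by
    refine isDiscrete_iff_nhdsNE.2 ?_
    rintro _ ⟨z, rfl⟩
    refine not_neBot.1 fun hacc' => hacc z (AccPt.mono hacc' ?_)
    exact principal_mono.2 (Set.range_subset_iff.2 hK)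
  exact isPreconnected_univ.constant_of_mapsTo hdiscrete hu.continuousOn
    (fun z _ => Set.mem_range_self z) trivial trivial

end Calculus

section Rigidity

variable {F G : Type*} [NormedAddCommGroup F] [NormedSpace ℝ F]
  [NormedAddCommGroup G] [NormedSpace ℝ G]

theorem lipschitzWith_one_of_hasFDerivAt_linearIsometryEquiv {k : F → G} {k' : F → F ≃ₗᵢ[ℝ] G}
    (hk : ∀ x, HasFDerivAt k (k' x : F →L[ℝ] G) x) : LipschitzWith 1 k := by
  refine lipschitzWith_of_nnnorm_fderiv_le (𝕜 := ℝ) (fun x => (hk x).differentiableAt) fun x => ?_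
  rw [(hk x).fderiv]
  exact (k' x).toLinearIsometry.norm_toContinuousLinearMap_le

theorem exists_eq_linearIsometryEquiv_add [CompleteSpace F] {k : F → G} {k' : F → F ≃ₗᵢ[ℝ] G}
    (hk : ∀ x, HasStrictFDerivAt k (k' x : F →L[ℝ] G) x) (hbij : Function.Bijective k) :
    ∃ T : F ≃ₗᵢ[ℝ] G, ∀ x, k x = T x + k 0 := by
  have hopen : IsOpenMap k :=
    isOpenMap_of_hasStrictFDerivAt_equiv (f' := fun x => (k' x).toContinuousLinearEquiv) hk
  have hcont : Continuous k := continuous_iff_continuousAt.2 fun x => (hk x).continuousAt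
  let e : F ≃ₜ G := (Equiv.ofBijective k hbij).toHomeomorphOfContinuousOpen hcont hopen
  have hsymm (y : G) : HasFDerivAt e.symm ((k' (e.symm y)).symm : G →L[ℝ] F) y :=
    HasFDerivAt.of_local_left_inverse (f' := (k' (e.symm y)).toContinuousLinearEquiv)
      e.symm.continuous.continuousAt (hk _).hasFDerivAt (.of_forall e.apply_symm_apply)
  have hlip := lipschitzWith_one_of_hasFDerivAt_linearIsometryEquiv fun x => (hk x).hasFDerivAt
  have hlip' := lipschitzWith_one_of_hasFDerivAt_linearIsometryEquiv hsymm
  have hisom : Isometry e := Isometry.of_dist_eq fun x y =>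
    le_antisymm (by simpa using! hlip.dist_le_mul x y)
      (by simpa using hlip'.dist_le_mul (e x) (e y))
  refine ⟨(IsometryEquiv.mk e.toEquiv hisom).toRealLinearIsometryEquiv, fun x => ?_⟩
  rw [IsometryEquiv.toRealLinearIsometryEquiv_apply]
  exact (sub_add_cancel _ _).symm

theorem exists_linearEquiv_eq_norm_sq [FiniteDimensional ℝ F] {Q : QuadraticForm ℝ F}
    (hQ : Q.PosDef) :
    ∃ L : F ≃ₗ[ℝ] EuclideanSpace ℝ (Fin (Module.finrank ℝ F)), ∀ v, Q v = ‖L v‖ ^ 2 := by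
  obtain ⟨w, hw, ⟨e⟩⟩ := Q.equivalent_one_neg_one_weighted_sum_squared
    (QuadraticMap.separatingLeft_of_anisotropic Q hQ.anisotropic)
  have hw_one (i : Fin (Module.finrank ℝ F)) : w i = 1 := by
    have hpos : 0 < Q (e.symm (Pi.single i 1)) := hQ _ (by simp)
    rw [QuadraticMap.IsometryEquiv.map_app] at hpos
    have hpos : 0 < w i := by
      simpa [QuadraticMap.weightedSumSquares_apply, Pi.single_apply] using hpos
    exact (hw i).resolve_left (by linarith)
  refine ⟨e.toLinearEquiv.trans (WithLp.linearEquiv 2 ℝ _).symm, fun v => ?_⟩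
  rw [← e.map_app, QuadraticMap.weightedSumSquares_apply, EuclideanSpace.real_norm_sq_eq]
  simp [hw_one, sq]

theorem exists_eq_continuousLinearEquiv_add [FiniteDimensional ℝ F] {g : F → F}
    {g' : F → F ≃L[ℝ] F} (hg : ∀ x, HasStrictFDerivAt g (g' x : F →L[ℝ] F) x)
    (hbij : Function.Bijective g) {Q : QuadraticForm ℝ F} (hQ : Q.PosDef)
    (hQg : ∀ x v, Q ((g' 0).symm (g' x v)) = Q v) :
    ∃ T : F ≃L[ℝ] F, ∀ x, g x = T x + g 0 := by
  obtain ⟨L, hL⟩ := exists_linearEquiv_eq_norm_sq hQ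
  let Lc : F ≃L[ℝ] _ := L.toContinuousLinearEquiv
  let k := fun y => Lc ((g' 0).symm (g (Lc.symm y)))
  let k' := fun y => ((Lc.symm.trans (g' (Lc.symm y))).trans (g' 0).symm).trans Lc
  have hk'_norm (y) (w) : ‖k' y w‖ = ‖w‖ := by
    rw [← sq_eq_sq₀ (norm_nonneg _) (norm_nonneg _)]
    calc ‖k' y w‖ ^ 2 = Q ((g' 0).symm (g' (Lc.symm y) (Lc.symm w))) := (hL _).symm
      _ = Q (Lc.symm w) := hQg _ _
      _ = ‖w‖ ^ 2 := by rw [hL]; simp [Lc]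
  have hk (y) : HasStrictFDerivAt k (k' y : _ →L[ℝ] _) y :=
    (Lc.hasStrictFDerivAt.comp _ (g' 0).symm.hasStrictFDerivAt).comp y
      ((hg _).comp y Lc.symm.hasStrictFDerivAt)
  have hk_bij : Function.Bijective k :=
    Lc.bijective.comp ((g' 0).symm.bijective.comp (hbij.comp Lc.symm.bijective))
  obtain ⟨T, hT⟩ := exists_eq_linearIsometryEquiv_add
    (k' := fun y => ⟨(k' y).toLinearEquiv, hk'_norm y⟩) hk hk_bij
  refine ⟨((Lc.trans T.toContinuousLinearEquiv).trans Lc.symm).trans (g' 0), fun x => ?_⟩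
  have hx : g' 0 (Lc.symm (k (Lc x))) = g' 0 (Lc.symm (T (Lc x) + k 0)) := by rw [hT]
  simpa [k] using hx

end Rigidity

section Location

/-- A noise density, not necessarily normalised. -/
structure RegularDensity {F : Type*} [NormedAddCommGroup F] [NormedSpace ℝ F] [MeasurableSpace F]
    (μ : Measure F) (ρ : F → ℝ) : Prop where
  contDiff : ContDiff ℝ 1 ρ
  pos : ∀ u, 0 < ρ u
  integrable : Integrable ρ μ

/-- The location family `ρ (· - z)` is, after the change of variable `g` with Jacobian factor `J`,
the location family `ρt (· - h z)`. -/
def LocationMatch {F : Type*} [Sub F] (ρ ρt : F → ℝ) (g h : F → F) (J : F → ℝ) : Prop :=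
  ∀ y z, ρ (y - z) = ρt (g y - h z) * J y

namespace LocationMatch

variable {F : Type*} {ρ ρt : F → ℝ} {g h : F → F} {J : F → ℝ}

theorem jacobian_pos [Sub F] (H : LocationMatch ρ ρt g h J) (hρ : ∀ u, 0 < ρ u)
    (hρt : ∀ u, 0 < ρt u) (y : F) : 0 < J y :=
  pos_of_mul_pos_right (H y y ▸ hρ _) (hρt _).le

theorem apply_eq_div [Sub F] (H : LocationMatch ρ ρt g h J) (hρ : ∀ u, 0 < ρ u)
    (hρt : ∀ u, 0 < ρt u) (y z : F) : ρt (g y - h z) = ρ (y - z) / J y := by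
  rw [H y z, mul_div_cancel_right₀ _ (H.jacobian_pos hρ hρt y).ne']

theorem apply_sub_add_eq [AddCommGroup F] (H : LocationMatch ρ ρt g h J)
    (hρt : ∀ u, 0 < ρt u) {u₀ c : F}
    (hc : ∀ z, g (z + u₀) = h z + c) (x y : F) :
    ρ (y - x + u₀) = ρt (g y - g x + c) * (ρ u₀ / ρt c) := by
  have hg_eq (y : F) : g y = h (y - u₀) + c := by rw [← hc, sub_add_cancel]
  have hJ : J y = ρ u₀ / ρt c := by
    have hy := H y (y - u₀)
    rw [hg_eq, add_sub_cancel_left, sub_sub_cancel] at hy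
    rw [hy, mul_div_cancel_left₀ _ (hρt c).ne']
  rw [← hJ, hg_eq x, sub_add_eq_sub_sub, sub_add_cancel, ← H, ← sub_add]

variable [NormedAddCommGroup F] [NormedSpace ℝ F]

theorem fderiv_sub (H : LocationMatch ρ ρt g h J) (hρ : Differentiable ℝ ρ)
    (hρt : Differentiable ℝ ρt) {h' : F →L[ℝ] F} {z : F} (hh : HasFDerivAt h h' z) (y : F) :
    fderiv ℝ ρ (y - z) = J y • (fderiv ℝ ρt (g y - h z)).comp h' := by
  have hleft : HasFDerivAt (fun z => ρ (y - z)) (-fderiv ℝ ρ (y - z)) z := by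
    simpa using! (hρ _).hasFDerivAt.comp z ((hasFDerivAt_id z).const_sub y)
  have hright : HasFDerivAt (fun z => ρt (g y - h z) * J y)
      (J y • (fderiv ℝ ρt (g y - h z)).comp (-h')) z :=
    ((hρt _).hasFDerivAt.comp z (hh.const_sub (g y))).mul_const (J y)
  rw [← neg_inj, hleft.unique (hright.congr_of_eventuallyEq (.of_forall (H y)))]
  simp

theorem fderiv_sub_eq_zero_iff (H : LocationMatch ρ ρt g h J) (hρ : Differentiable ℝ ρ)
    (hρt : Differentiable ℝ ρt) {h' : F ≃L[ℝ] F} {z : F}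
    (hh : HasFDerivAt h (h' : F →L[ℝ] F) z) {y : F} (hJ : J y ≠ 0) :
    fderiv ℝ ρ (y - z) = 0 ↔ fderiv ℝ ρt (g y - h z) = 0 := by
  rw [H.fderiv_sub hρ hρt hh, smul_eq_zero_iff_right hJ]
  refine ⟨fun h0 => ?_, fun h0 => by simp [h0]⟩
  ext v
  simpa using congr($h0 (h'.symm v))

theorem not_accPt_critical [CompleteSpace F] (H : LocationMatch ρ ρt g h J)
    (hρ : Differentiable ℝ ρ) (hρt : Differentiable ℝ ρt) (hρ_pos : ∀ u, 0 < ρ u)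
    (hρt_pos : ∀ u, 0 < ρt u) {h' : F → F ≃L[ℝ] F}
    (hh : ∀ z, HasStrictFDerivAt h (h' z : F →L[ℝ] F) z) {u₀ : F}
    (hu₀ : ¬ AccPt u₀ (𝓟 {u | fderiv ℝ ρ u = 0})) (z : F) :
    ¬ AccPt (g (z + u₀) - h z) (𝓟 {u | fderiv ℝ ρt u = 0}) := by
  rw [accPt_iff_frequently_nhdsNE, not_frequently, eventually_nhdsWithin_iff] at hu₀ ⊢
  have hρ_near : ∀ᶠ z' in 𝓝 z, z + u₀ - z' ≠ u₀ → fderiv ℝ ρ (z + u₀ - z') ≠ 0 :=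
    (Continuous.tendsto' (by fun_prop) z u₀ (by simp)).eventually hu₀
  have hρt_near : ∀ᶠ x in 𝓝 (h z), x ≠ h z → fderiv ℝ ρt (g (z + u₀) - x) ≠ 0 := by
    rw [← (hh z).map_nhds_eq_of_equiv, eventually_map]
    filter_upwards [hρ_near] with z' hz' hne
    rw [Ne, ← H.fderiv_sub_eq_zero_iff hρ hρt (hh z').hasFDerivAt
      (H.jacobian_pos hρ_pos hρt_pos _).ne']
    exact hz' fun heq => hne (congrArg h (Eq.symm (by simpa [sub_eq_iff_eq_add'] using heq)))
  have hpull := (Continuous.tendsto' (f := fun w => g (z + u₀) - w) (by fun_prop)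
    (g (z + u₀) - h z) (h z) (by simp)).eventually hρt_near
  filter_upwards [hpull] with w hw hne
  simpa using hw fun heq => hne (by simp [← heq])

theorem exists_apply_add_eq_add [CompleteSpace F] (H : LocationMatch ρ ρt g h J)
    (hρ : Differentiable ℝ ρ) (hρt : Differentiable ℝ ρt) (hρ_pos : ∀ u, 0 < ρ u)
    (hρt_pos : ∀ u, 0 < ρt u) (hg : Continuous g) {h' : F → F ≃L[ℝ] F}
    (hh : ∀ z, HasStrictFDerivAt h (h' z : F →L[ℝ] F) z) {u₀ : F} (h0 : fderiv ℝ ρ u₀ = 0)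
    (hu₀ : ¬ AccPt u₀ (𝓟 {u | fderiv ℝ ρ u = 0})) :
    ∃ c, ∀ z, g (z + u₀) = h z + c := by
  have hh_cont : Continuous h := continuous_iff_continuousAt.2 fun z => (hh z).continuousAt
  have hcrit (z : F) : fderiv ℝ ρt (g (z + u₀) - h z) = 0 := by
    rw [← H.fderiv_sub_eq_zero_iff hρ hρt (hh z).hasFDerivAt
      (H.jacobian_pos hρ_pos hρt_pos _).ne']
    simpa using h0
  refine ⟨g (0 + u₀) - h 0, fun z => ?_⟩
  rw [← apply_eq_of_forall_not_accPt (u := fun z => g (z + u₀) - h z) (by fun_prop) hcrit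
    (H.not_accPt_critical hρ hρt hρ_pos hρt_pos hh hu₀) z 0]
  abel

variable [MeasurableSpace F] [BorelSpace F] {μ : Measure F} [μ.IsAddHaarMeasure]

theorem injective_right (H : LocationMatch ρ ρt g h J) (hρ : RegularDensity μ ρ) :
    Function.Injective h := by
  intro z z' hzz'
  refine sub_eq_zero.1 (eq_zero_of_forall_add_eq hρ.contDiff.continuous hρ.pos hρ.integrable
    fun u => ?_)
  calc ρ (u + (z - z')) = ρ (u + z - z') := by rw [add_sub_assoc]
    _ = ρ (u + z - z) := by rw [H, H, hzz']
    _ = ρ u := by rw [add_sub_cancel_right]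

variable [FiniteDimensional ℝ F]

theorem continuous_right (H : LocationMatch ρ ρt g h J) (hρ : RegularDensity μ ρ)
    (hρt : RegularDensity μ ρt) (hg : Function.Surjective g) : Continuous h := by
  have := FiniteDimensional.proper_real F
  refine continuous_iff_continuousAt.2 fun z => ?_
  have hlim : Tendsto (fun z' => h z - h z') (𝓝 z) (𝓝 0) := by
    refine tendsto_zero_of_tendsto_comp_add hρt.contDiff.continuous hρt.pos hρt.integrable
      fun w => ?_
    obtain ⟨y, hy⟩ := hg (w + h z)
    have hw (z' : F) : ρt (w + (h z - h z')) = ρ (y - z') / J y := by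
      rw [← H.apply_eq_div hρ.pos hρt.pos, hy, add_sub_assoc]
    have hw₀ : ρt w = ρ (y - z) / J y := by simpa using hw z
    simp_rw [hw, hw₀]
    have := hρ.contDiff.continuous
    exact Continuous.tendsto (by fun_prop) z
  simpa [ContinuousAt] using (tendsto_const_nhds (x := h z)).sub hlim

theorem contDiff_right (H : LocationMatch ρ ρt g h J) (hρ : RegularDensity μ ρ)
    (hρt : RegularDensity μ ρt) (hg : Function.Surjective g) : ContDiff ℝ 1 h := by
  refine contDiff_iff_contDiffAt.2 fun z =>
    contDiffAt_of_forall_contDiffAt_comp (φ := fun y v => ρt (g y - v)) one_ne_zero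
      (fun y => ?_) (fun v hv => ?_) (H.continuous_right hρ hρt hg).continuousAt fun y => ?_
  · exact (hρt.contDiff.comp (contDiff_const.sub contDiff_id)).contDiffAt
  · have hρt_diff := hρt.contDiff.differentiable one_ne_zero
    refine eq_zero_of_forall_fderiv_apply_eq_zero hρt_diff hρt.pos hρt.integrable fun w => ?_
    obtain ⟨y, hy⟩ := hg (w + h z)
    have hderiv : HasFDerivAt (fun v => ρt (g y - v)) (-fderiv ℝ ρt w) (h z) := by
      simpa [hy] using! (hρt_diff _).hasFDerivAt.comp (h z) ((hasFDerivAt_id _).const_sub (g y))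
    simpa [hderiv.fderiv] using hv y
  · have hcomp : (fun v => ρt (g y - v)) ∘ h = fun z => ρ (y - z) / J y :=
      funext (H.apply_eq_div hρ.pos hρt.pos y)
    rw [hcomp]
    exact ((hρ.contDiff.comp (contDiff_const.sub contDiff_id)).div_const _).contDiffAt

theorem exists_hasStrictFDerivAt_right (H : LocationMatch ρ ρt g h J) (hρ : RegularDensity μ ρ)
    (hρt : RegularDensity μ ρt) (hg : Function.Surjective g) :
    ∃ h' : F → F ≃L[ℝ] F, ∀ z, HasStrictFDerivAt h (h' z : F →L[ℝ] F) z := by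
  have hh := H.contDiff_right hρ hρt hg
  have hρ_diff := hρ.contDiff.differentiable one_ne_zero
  have hinj (z : F) : Function.Injective (fderiv ℝ h z) := by
    refine (injective_iff_map_eq_zero _).2 fun v hv =>
      eq_zero_of_forall_fderiv_apply_eq_zero hρ_diff hρ.pos hρ.integrable fun u => ?_
    have hu := H.fderiv_sub hρ_diff (hρt.contDiff.differentiable one_ne_zero)
      (hh.differentiable one_ne_zero z).hasFDerivAt (u + z)
    simpa [hv] using congr($hu v)
  exact ⟨fun z => (LinearEquiv.ofInjectiveEndo _ (hinj z)).toContinuousLinearEquiv,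
    fun z => hh.contDiffAt.hasStrictFDerivAt one_ne_zero⟩

end LocationMatch

/- `ψ` is invariant under `t ↦ g⁻¹ (g (x + t) - g x + g 0)`, which fixes `0`. -/
theorem fderiv_fderiv_apply_eq_of_difference_eq {F : Type*} [NormedAddCommGroup F]
    [NormedSpace ℝ F] [CompleteSpace F] {ψ ψt : F → ℝ} {g : F → F} {g' : F → F ≃L[ℝ] F}
    (hg : ContDiff ℝ 1 g) (hg' : ∀ x, HasFDerivAt g (g' x : F →L[ℝ] F) x)
    (hψ : ContDiffAt ℝ 2 ψ 0) (h0 : fderiv ℝ ψ 0 = 0)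
    (hdiff : ∀ x y, ψ (y - x) = ψt (g y - g x)) (x v w : F) :
    fderiv ℝ (fderiv ℝ ψ) 0 v w =
      fderiv ℝ (fderiv ℝ ψ) 0 ((g' 0).symm (g' x v)) ((g' 0).symm (g' x w)) := by
  let gInv : F → F := hg.contDiffAt.localInverse (hg' 0) one_ne_zero
  have hgInv : HasFDerivAt gInv ((g' 0).symm : F →L[ℝ] F) (g 0) :=
    (hg.contDiffAt.hasStrictFDerivAt' (hg' 0) one_ne_zero).to_localInverse.hasFDerivAt
  have hgInv_diff : ContDiffAt ℝ 1 gInv (g 0) := hg.contDiffAt.to_localInverse (hg' 0) one_ne_zero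
  let s : F → F := fun t => g (x + t) - g x + g 0
  have hs0 : s 0 = g 0 := by simp [s]
  have hs : HasFDerivAt s (g' x : F →L[ℝ] F) 0 := by
    have hshift : HasFDerivAt (fun t => g (x + t)) (g' x : F →L[ℝ] F) 0 := by
      simpa using! (hg' (x + 0)).comp 0 ((hasFDerivAt_id 0).const_add x)
    exact (hshift.sub_const _).add_const _
  have hs_diff : ContDiffAt ℝ 1 s 0 := by fun_prop
  let m : F → F := gInv ∘ s
  have hm0 : m 0 = 0 := by
    simpa [m, hs0] using hg.contDiffAt.localInverse_apply_image (hg' 0) one_ne_zero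
  rw [← hs0] at hgInv hgInv_diff
  have hm : HasFDerivAt m (((g' 0).symm : F →L[ℝ] F) ∘L (g' x : F →L[ℝ] F)) 0 := hgInv.comp 0 hs
  have hm_diff : ContDiffAt ℝ 1 m 0 := hgInv_diff.comp 0 hs_diff
  have hψm : ψ ∘ m =ᶠ[𝓝 0] ψ := by
    have hright : ∀ᶠ t in 𝓝 0, g (m t) = s t :=
      (hs0 ▸ hs.continuousAt.tendsto).eventually
        (hg.contDiffAt.hasStrictFDerivAt' (hg' 0) one_ne_zero).eventually_right_inverse
    filter_upwards [hright] with t ht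
    calc ψ (m t) = ψt (g (m t) - g 0) := by simp [← hdiff]
      _ = ψt (g (x + t) - g x) := by rw [ht]; simp [s]
      _ = ψ t := by simp [← hdiff]
  rw [← hm0] at hψ h0
  have hchain := fderiv_fderiv_comp_apply_of_fderiv_eq_zero hψ hm_diff h0 v w
  rw [hm0, hm.fderiv, hψm.fderiv.fderiv_eq] at hchain
  exact hchain

/-- The quadratic form `v ↦ -D²ρ(u)(v, v)`. -/
def negHessian {F : Type*} [NormedAddCommGroup F] [NormedSpace ℝ F] (ρ : F → ℝ) (u : F) :
    QuadraticForm ℝ F :=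
  LinearMap.BilinMap.toQuadraticMap
    (-(ContinuousLinearMap.coeLM ℝ ∘ₗ (fderiv ℝ (fderiv ℝ ρ) u : F →ₗ[ℝ] F →L[ℝ] ℝ)))

section NegHessian

variable {F : Type*} [NormedAddCommGroup F] [NormedSpace ℝ F] {ρ : F → ℝ} {u : F}

theorem negHessian_apply (ρ : F → ℝ) (u v : F) :
    negHessian ρ u v = -fderiv ℝ (fderiv ℝ ρ) u v v := rfl

theorem negHessian_apply_eq_of_difference_eq [CompleteSpace F] {ψ : F → ℝ} {g : F → F}
    {g' : F → F ≃L[ℝ] F} (hg : ContDiff ℝ 1 g)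
    (hg' : ∀ x, HasFDerivAt g (g' x : F →L[ℝ] F) x) (hρ : ContDiffAt ℝ 2 ρ u)
    (h0 : fderiv ℝ ρ u = 0) (hdiff : ∀ x y, ρ (y - x + u) = ψ (g y - g x)) (x v : F) :
    negHessian ρ u ((g' 0).symm (g' x v)) = negHessian ρ u v := by
  have hshift : fderiv ℝ (fun t => ρ (t + u)) = fun t => fderiv ℝ ρ (t + u) :=
    funext fun _ => fderiv_comp_add_right u
  have hinv := fderiv_fderiv_apply_eq_of_difference_eq (ψ := fun t => ρ (t + u)) hg hg'
    (ContDiffAt.comp 0 (by simpa) (by fun_prop)) (by simpa [hshift]) hdiff x v v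
  rw [hshift, fderiv_comp_add_right, zero_add] at hinv
  rw [negHessian_apply, negHessian_apply, hinv]

theorem not_accPt_critical_of_posDef_negHessian [FiniteDimensional ℝ F]
    (hρ : ContDiffAt ℝ 2 ρ u) (hpos : (negHessian ρ u).PosDef) :
    ¬ AccPt u (𝓟 {x | fderiv ℝ ρ x = 0}) :=
  not_accPt_setOf_fderiv_eq_zero hρ fun v hv => by
    by_contra hv0
    simpa [negHessian_apply, hv] using hpos v hv0

end NegHessian

theorem LocationMatch.exists_continuousLinearEquiv {F : Type*} [NormedAddCommGroup F]
    [NormedSpace ℝ F] [FiniteDimensional ℝ F] [MeasurableSpace F] [BorelSpace F] {μ : Measure F}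
    [μ.IsAddHaarMeasure] {ρ ρt : F → ℝ} {g h : F → F} {J : F → ℝ}
    (H : LocationMatch ρ ρt g h J) (hρ : RegularDensity μ ρ) (hρt : RegularDensity μ ρt)
    (hg : Continuous g) (hg_surj : Function.Surjective g) {u₀ : F} (h0 : fderiv ℝ ρ u₀ = 0)
    (hρ2 : ContDiffAt ℝ 2 ρ u₀) (hpos : (negHessian ρ u₀).PosDef) :
    ∃ T : F ≃L[ℝ] F, (∀ y, g y = T y + g 0) ∧ ∀ z, h z = T z + h 0 := by
  obtain ⟨h', hh⟩ := H.exists_hasStrictFDerivAt_right hρ hρt hg_surj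
  obtain ⟨c, hc⟩ := H.exists_apply_add_eq_add (hρ.contDiff.differentiable one_ne_zero)
    (hρt.contDiff.differentiable one_ne_zero) hρ.pos hρt.pos hg hh h0
    (not_accPt_critical_of_posDef_negHessian hρ2 hpos)
  have hg_eq : g = fun y => h (y - u₀) + c := funext fun y => by rw [← hc, sub_add_cancel]
  have hg' (y : F) : HasStrictFDerivAt g (h' (y - u₀) : F →L[ℝ] F) y := by
    rw [hg_eq]
    simpa using! ((hh _).comp y ((hasStrictFDerivAt_id y).sub_const u₀)).add_const c
  have hg_contDiff : ContDiff ℝ 1 g := by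
    rw [hg_eq]
    have := H.contDiff_right hρ hρt hg_surj
    fun_prop
  have hg_inj : Function.Injective g := fun x y hxy => by
    simpa [hg_eq, (H.injective_right hρ).eq_iff] using hxy
  obtain ⟨T, hT⟩ := exists_eq_continuousLinearEquiv_add hg' ⟨hg_inj, hg_surj⟩ hpos
    (negHessian_apply_eq_of_difference_eq (g' := fun y => h' (y - u₀))
      (ψ := fun t => ρt (t + c) * (ρ u₀ / ρt c)) hg_contDiff (fun y => (hg' y).hasFDerivAt) hρ2 h0
      (H.apply_sub_add_eq hρt.pos hc))
  have hh_eq (z : F) : h z = T z + (T u₀ + g 0 - c) := by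
    rw [← add_sub_cancel_right (h z) c, ← hc, hT, map_add]
    abel
  exact ⟨T, hT, fun z => by rw [hh_eq z, hh_eq 0, map_zero, zero_add]⟩

end Location

theorem abs_det_eq_one {n : ℕ} {Q : Matrix (Fin n) (Fin n) ℝ} (hQ : Q * Qᵀ = 1) :
    |Q.det| = 1 := by
  have hdet : Q.det * Q.det = 1 := by simpa using congrArg Matrix.det hQ
  exact (abs_eq zero_le_one).2 (mul_self_eq_one_iff.1 hdet)

section MulVecE

variable {n : ℕ} {A B : Matrix (Fin n) (Fin n) ℝ}

theorem mulVecE_eq_toEuclideanCLM (A : Matrix (Fin n) (Fin n) ℝ) :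
    mulVecE A = Matrix.toEuclideanCLM (𝕜 := ℝ) A := rfl

theorem mulVecE_apply (A : Matrix (Fin n) (Fin n) ℝ) (x : E n) (i : Fin n) :
    mulVecE A x i = ∑ j, A i j * x j := rfl

@[fun_prop]
theorem continuous_mulVecE (A : Matrix (Fin n) (Fin n) ℝ) : Continuous (mulVecE A) :=
  (Matrix.toEuclideanCLM (𝕜 := ℝ) A).continuous

theorem mulVecE_mul (A B : Matrix (Fin n) (Fin n) ℝ) (x : E n) :
    mulVecE (A * B) x = mulVecE A (mulVecE B x) := by
  simp [mulVecE]

theorem mulVecE_one (x : E n) : mulVecE 1 x = x := by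
  simp [mulVecE]

theorem mulVecE_sub (A : Matrix (Fin n) (Fin n) ℝ) (x y : E n) :
    mulVecE A (x - y) = mulVecE A x - mulVecE A y := by
  simp [mulVecE_eq_toEuclideanCLM]

theorem mulVecE_zero (A : Matrix (Fin n) (Fin n) ℝ) : mulVecE A 0 = 0 := by
  simp [mulVecE_eq_toEuclideanCLM]

theorem mulVecE_injective : Function.Injective (mulVecE (m := n) (n := n)) := fun _ _ hAB =>
  (Matrix.toEuclideanCLM (𝕜 := ℝ)).injective (DFunLike.coe_injective hAB)

theorem det_toEuclideanLin (A : Matrix (Fin n) (Fin n) ℝ) :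
    LinearMap.det (Matrix.toEuclideanLin A) = A.det := by
  rw [Matrix.toEuclideanLin_eq_toLin_orthonormal, LinearMap.det_toLin]

theorem mulVecE_mulVecE_of_mul_eq_one (hAB : A * B = 1) (x : E n) :
    mulVecE A (mulVecE B x) = x := by
  rw [← mulVecE_mul, hAB, mulVecE_one]

theorem isHomeomorph_mulVecE (hA : IsUnit A.det) : IsHomeomorph (mulVecE A) :=
  isHomeomorph_iff_exists_inverse.2 ⟨continuous_mulVecE A, mulVecE A⁻¹,
    mulVecE_mulVecE_of_mul_eq_one (A.nonsing_inv_mul hA),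
    mulVecE_mulVecE_of_mul_eq_one (A.mul_nonsing_inv hA), continuous_mulVecE A⁻¹⟩

theorem integral_comp_mulVecE_add (hA : IsUnit A.det) (b : E n) (φ : E n → ℝ) :
    ∫ u, φ (mulVecE A u + b) = |A.det|⁻¹ * ∫ u, φ u := by
  have hmap : Measure.map (mulVecE A) volume = ENNReal.ofReal |A.det⁻¹| • volume := by
    rw [← det_toEuclideanLin]
    exact Measure.map_linearMap_addHaar_eq_smul_addHaar volume (f := Matrix.toEuclideanLin A)
      (by rw [det_toEuclideanLin]; exact hA.ne_zero)
  have hemb : MeasurableEmbedding (mulVecE A) :=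
    (isHomeomorph_mulVecE hA).isClosedEmbedding.measurableEmbedding
  rw [← hemb.integral_map fun u => φ (u + b), hmap, integral_smul_measure,
    integral_add_right_eq_self φ b, ENNReal.toReal_ofReal (abs_nonneg _), abs_inv, smul_eq_mul]

theorem det_fderiv_mulVecE_comp (hA : IsUnit A.det) (f : E n → E n) (z : E n) :
    (fderiv ℝ (fun z => mulVecE A (f z)) z).det = A.det * (fderiv ℝ f z).det := by
  have hdet : (Matrix.toEuclideanCLM (𝕜 := ℝ) A).det = A.det := det_toEuclideanLin A
  rw [← hdet, ContinuousLinearMap.det, ContinuousLinearMap.det, ContinuousLinearMap.det,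
    ← LinearMap.det_comp]
  exact congrArg (fun L : E n →L[ℝ] E n => LinearMap.det (L : E n →ₗ[ℝ] E n))
    (ContinuousLinearMap.toContinuousLinearEquivOfDetNeZero _
      (hdet ▸ hA.ne_zero)).comp_fderiv

end MulVecE

namespace AdmissibleDensity

variable {n : ℕ} {ρ ρt : E n → ℝ}

theorem integrable (hρ : AdmissibleDensity ρ) : Integrable ρ := by
  by_contra hn
  exact zero_ne_one ((integral_undef hn).symm.trans hρ.2.2.1)

theorem integrable_sq_mul (hρ : AdmissibleDensity ρ) (i : Fin n) :
    Integrable fun u : E n => u i * u i * ρ u := by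
  by_contra hn
  simpa using (integral_undef hn).symm.trans (hρ.2.2.2.2 i i)

theorem integrable_mul (hρ : AdmissibleDensity ρ) (i : Fin n) :
    Integrable fun u : E n => u i * ρ u := by
  have hρ_cont := hρ.1.continuous
  refine (hρ.integrable.add (hρ.integrable_sq_mul i)).mono' (by fun_prop) (ae_of_all _ fun u => ?_)
  have hu : |u i| ≤ 1 + u i * u i :=
    abs_le.2 ⟨by nlinarith [sq_nonneg (u i + 1)], by nlinarith [sq_nonneg (u i - 1)]⟩
  rw [Real.norm_eq_abs, abs_mul, abs_of_pos (hρ.2.1 u)]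
  exact (mul_le_mul_of_nonneg_right hu (hρ.2.1 u).le).trans_eq (by simp [add_mul])

theorem integrable_mul_mul (hρ : AdmissibleDensity ρ) (i j : Fin n) :
    Integrable fun u : E n => u i * u j * ρ u := by
  have hρ_cont := hρ.1.continuous
  refine ((hρ.integrable_sq_mul i).add (hρ.integrable_sq_mul j)).mono' (by fun_prop)
    (ae_of_all _ fun u => ?_)
  have hu : |u i * u j| ≤ u i * u i + u j * u j :=
    abs_le.2 ⟨by nlinarith [sq_nonneg (u i + u j)], by nlinarith [sq_nonneg (u i - u j)]⟩
  rw [Real.norm_eq_abs, abs_mul, abs_of_pos (hρ.2.1 u)]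
  exact (mul_le_mul_of_nonneg_right hu (hρ.2.1 u).le).trans_eq (by simp [add_mul])

theorem regularDensity (hρ : AdmissibleDensity ρ) : RegularDensity volume ρ :=
  ⟨hρ.1, hρ.2.1, hρ.integrable⟩

theorem integral_mulVecE_add_apply (hρ : AdmissibleDensity ρ) (A : Matrix (Fin n) (Fin n) ℝ)
    (b : E n) (i : Fin n) : ∫ u, (mulVecE A u + b) i * ρ u = b i := by
  have hA : Integrable fun u : E n => ∑ j, A i j * (u j * ρ u) :=
    integrable_finsetSum _ fun j _ => (hρ.integrable_mul j).const_mul _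
  simp only [PiLp.add_apply, mulVecE_apply, add_mul, Finset.sum_mul, mul_assoc]
  rw [integral_add hA (hρ.integrable.const_mul _),
    integral_finsetSum _ fun j _ => (hρ.integrable_mul j).const_mul _]
  simp [integral_const_mul, hρ.2.2.1, hρ.2.2.2.1]

theorem integral_mulVecE_apply_mul (hρ : AdmissibleDensity ρ) (A : Matrix (Fin n) (Fin n) ℝ)
    (i j : Fin n) : ∫ u, mulVecE A u i * mulVecE A u j * ρ u = (A * Aᵀ) i j := by
  have hexpand (u : E n) : mulVecE A u i * mulVecE A u j * ρ u =
      ∑ k, ∑ l, A i k * A j l * (u k * u l * ρ u) := by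
    rw [mulVecE_apply, mulVecE_apply, Finset.sum_mul_sum]
    simp only [Finset.sum_mul]
    exact Finset.sum_congr rfl fun k _ => Finset.sum_congr rfl fun l _ => by ring
  have hint (k l : Fin n) : Integrable fun u : E n => A i k * A j l * (u k * u l * ρ u) :=
    (hρ.integrable_mul_mul k l).const_mul _
  simp_rw [hexpand]
  rw [integral_finsetSum _ fun k _ => integrable_finsetSum _ fun l _ => hint k l]
  simp_rw [integral_finsetSum _ fun l _ => hint _ l, integral_const_mul, hρ.2.2.2.2]
  simp [Matrix.mul_apply]

theorem integral_comp_mul_eq_of_affine (hρ : AdmissibleDensity ρ) (hρt : AdmissibleDensity ρt)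
    {A : Matrix (Fin n) (Fin n) ℝ} (hA : IsUnit A.det) {b : E n} {J : ℝ}
    (h : ∀ u, ρ u = ρt (mulVecE A u + b) * J) (φ : E n → ℝ) :
    ∫ u, φ (mulVecE A u + b) * ρ u = ∫ u, φ u * ρt u := by
  have hscale (φ : E n → ℝ) :
      ∫ u, φ (mulVecE A u + b) * ρ u = |A.det|⁻¹ * J * ∫ u, φ u * ρt u := by
    simp_rw [h, ← mul_assoc, integral_mul_const]
    rw [integral_comp_mulVecE_add hA b fun u => φ u * ρt u]
    ring
  have hnorm : |A.det|⁻¹ * J = 1 := by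
    simpa [hρ.2.2.1, hρt.2.2.1] using (hscale fun _ => 1).symm
  rw [hscale, hnorm, one_mul]

theorem eq_zero_of_affine (hρ : AdmissibleDensity ρ) (hρt : AdmissibleDensity ρt)
    {A : Matrix (Fin n) (Fin n) ℝ} (hA : IsUnit A.det) {b : E n} {J : ℝ}
    (h : ∀ u, ρ u = ρt (mulVecE A u + b) * J) : b = 0 := by
  ext i
  rw [← hρ.integral_mulVecE_add_apply A b,
    hρ.integral_comp_mul_eq_of_affine hρt hA h fun u => u i, hρt.2.2.2.1, PiLp.zero_apply]

theorem mul_transpose_eq_one_of_linear (hρ : AdmissibleDensity ρ) (hρt : AdmissibleDensity ρt)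
    {A : Matrix (Fin n) (Fin n) ℝ} (hA : IsUnit A.det) {J : ℝ}
    (h : ∀ u, ρ u = ρt (mulVecE A u) * J) : A * Aᵀ = 1 := by
  ext i j
  have hcov := hρ.integral_comp_mul_eq_of_affine hρt hA (b := 0) (by simpa using h)
    fun u => u i * u j
  simp only [add_zero] at hcov
  rw [← hρ.integral_mulVecE_apply_mul, hcov, hρt.2.2.2.2, Matrix.one_apply]

theorem comp_mulVecE_transpose (hρ : AdmissibleDensity ρ) {Q : Matrix (Fin n) (Fin n) ℝ}
    (hQ : Q * Qᵀ = 1) : AdmissibleDensity fun u => ρ (mulVecE Qᵀ u) := by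
  have hinv := mulVecE_mulVecE_of_mul_eq_one (mul_eq_one_comm.1 hQ)
  have hchange (φ : E n → ℝ) :
      ∫ u, φ u * ρ (mulVecE Qᵀ u) = ∫ u, φ (mulVecE Q u) * ρ u := by
    have := integral_comp_mulVecE_add (Matrix.isUnit_det_of_right_inverse hQ) 0
      fun u => φ u * ρ (mulVecE Qᵀ u)
    simpa [hinv, abs_det_eq_one hQ] using this.symm
  refine ⟨hρ.1.comp (Matrix.toEuclideanCLM (𝕜 := ℝ) Qᵀ).contDiff, fun u => hρ.2.1 _, ?_,
    fun i => ?_, fun i j => ?_⟩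
  · simpa [hρ.2.2.1] using hchange fun _ => 1
  · simpa [hchange fun u => u i] using hρ.integral_mulVecE_add_apply Q 0 i
  · rw [hchange fun u => u i * u j, hρ.integral_mulVecE_apply_mul, hQ, Matrix.one_apply]

end AdmissibleDensity

section LocationModel

theorem exists_factor_of_ae_mul_eq_mul {X Y : Type*} [TopologicalSpace X] [MeasurableSpace X]
    [TopologicalSpace Y] [MeasurableSpace Y] [Nonempty X] {μ : Measure Y} [μ.IsOpenPosMeasure]
    {ν : Measure X} [ν.IsOpenPosMeasure] [SFinite ν] {α β : Y → X → ℝ} {D Dt : Y → ℝ}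
    (hα : ∀ y, Continuous (α y)) (hα' : ∀ x, Continuous (α · x)) (hβ : ∀ y, Continuous (β y))
    (hβ' : ∀ x, Continuous (β · x)) (hβ0 : ∀ y x, β y x ≠ 0) (hD : ∀ᵐ y ∂μ, D y ≠ 0)
    (h : ∀ᵐ w ∂μ.prod ν, α w.1 w.2 * D w.1 = β w.1 w.2 * Dt w.1) :
    ∃ J : Y → ℝ, ∀ y x, α y x = β y x * J y := by
  let x₀ : X := Classical.arbitrary X
  have hcross (x : X) : (fun y => α y x * β y x₀) =ᵐ[μ] fun y => β y x * α y x₀ := by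
    filter_upwards [Measure.ae_ae_of_ae_prod h, hD] with y hy hDy
    have hall : (fun x => α y x * D y) = fun x => β y x * Dt y :=
      (Continuous.ae_eq_iff_eq ν ((hα y).mul_const _) ((hβ y).mul_const _)).1 hy
    refine mul_right_cancel₀ hDy ?_
    linear_combination β y x₀ * congrFun hall x - β y x * congrFun hall x₀
  refine ⟨fun y => α y x₀ / β y x₀, fun y x => ?_⟩
  rw [← mul_div_assoc, eq_div_iff (hβ0 y x₀)]
  exact congrFun ((Continuous.ae_eq_iff_eq μ ((hα' x).mul (hβ' x₀))
    ((hβ' x).mul (hα' x₀))).1 (hcross x)) y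

variable {F X Y : Type*} [NormedAddCommGroup F] [NormedSpace ℝ F] [MeasurableSpace F]
  [BorelSpace F] {μ : Measure F} [μ.IsAddHaarMeasure] {ρ ρt : F → ℝ} {f₀ ft₀ : Y → F}
  {F₁ Ft₁ : X → F} {J : Y → ℝ}

theorem factorsThrough_of_location (hρ : ∀ u, 0 < ρ u) (hρt : RegularDensity μ ρt)
    (hft₀ : Function.Surjective ft₀)
    (h : ∀ y x, ρ (f₀ y - F₁ x) = ρt (ft₀ y - Ft₁ x) * J y) : Ft₁.FactorsThrough F₁ := by
  intro x x' hxx'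
  refine sub_eq_zero.1 (eq_zero_of_forall_add_eq hρt.contDiff.continuous hρt.pos
    hρt.integrable fun u => ?_)
  obtain ⟨y, hy⟩ := hft₀ (u + Ft₁ x)
  have hJ : J y ≠ 0 := right_ne_zero_of_mul (h y x ▸ (hρ _).ne')
  have hyx : ρt (ft₀ y - Ft₁ x') = ρt (ft₀ y - Ft₁ x) :=
    mul_right_cancel₀ hJ (by rw [← h, ← h, hxx'])
  simpa [hy, add_sub_assoc] using hyx

theorem exists_continuousLinearEquiv_of_location [FiniteDimensional ℝ F]
    [TopologicalSpace Y] (hρ : RegularDensity μ ρ) (hρt : RegularDensity μ ρt) {u₀ : F}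
    (h0 : fderiv ℝ ρ u₀ = 0) (hρ2 : ContDiffAt ℝ 2 ρ u₀)
    (hpos : (negHessian ρ u₀).PosDef) (hf₀ : IsHomeomorph f₀) (hft₀ : Continuous ft₀)
    (hft₀_surj : Function.Surjective ft₀) (hF₁ : Function.Surjective F₁)
    (h : ∀ y x, ρ (f₀ y - F₁ x) = ρt (ft₀ y - Ft₁ x) * J y) :
    ∃ (T : F ≃L[ℝ] F) (a b : F), (∀ y, ft₀ y = T (f₀ y) + a) ∧ ∀ x, Ft₁ x = T (F₁ x) + b := by
  obtain ⟨k, hk⟩ := (Function.factorsThrough_iff Ft₁).1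
    (factorsThrough_of_location hρ.pos hρt hft₀_surj h)
  let e := hf₀.homeomorph
  have H : LocationMatch ρ ρt (ft₀ ∘ e.symm) k (J ∘ e.symm) := fun y z => by
    obtain ⟨x, rfl⟩ := hF₁ z
    have hey : f₀ (e.symm y) = y := e.apply_symm_apply y
    simpa [hk, hey] using h (e.symm y) x
  obtain ⟨T, hg, hh⟩ := H.exists_continuousLinearEquiv hρ hρt (hft₀.comp e.symm.continuous)
    (hft₀_surj.comp e.symm.surjective) h0 hρ2 hpos
  refine ⟨T, ft₀ (e.symm 0), k 0, fun y => ?_, fun x => ?_⟩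
  · have hey : e.symm (f₀ y) = y := e.symm_apply_apply y
    simpa only [Function.comp_apply, hey] using hg (f₀ y)
  · rw [hk, Function.comp_apply, hh]

end LocationModel

theorem LocalMaxCondition.exists_posDef_negHessian {n : ℕ} {ρ : E n → ℝ}
    (hρ : LocalMaxCondition ρ) :
    ∃ u, fderiv ℝ ρ u = 0 ∧ ContDiffAt ℝ 2 ρ u ∧ (negHessian ρ u).PosDef := by
  obtain ⟨u, hmax, hsmooth, hneg⟩ := hρ
  refine ⟨u, hmax.fderiv_eq_zero, hsmooth, fun v hv => ?_⟩
  simpa [negHessian_apply, iteratedFDeriv_two_apply] using hneg v hv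

theorem exists_orthogonal_of_location {p : ℕ} {X Y : Type*} [TopologicalSpace Y]
    {ρ ρt : E p → ℝ} (hρ : AdmissibleDensity ρ) (hρmax : LocalMaxCondition ρ)
    (hρt : AdmissibleDensity ρt) {f₀ ft₀ : Y → E p} {F₁ Ft₁ : X → E p} {J : Y → ℝ} {y₀ : Y}
    (hf₀ : IsHomeomorph f₀) (hf₀0 : f₀ y₀ = 0) (hft₀ : Continuous ft₀)
    (hft₀_surj : Function.Surjective ft₀) (hft₀0 : ft₀ y₀ = 0) (hF₁ : Function.Surjective F₁)
    (h : ∀ y x, ρ (f₀ y - F₁ x) = ρt (ft₀ y - Ft₁ x) * J y) :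
    ∃ M : Matrix (Fin p) (Fin p) ℝ, M * Mᵀ = 1 ∧ (∀ y, ft₀ y = mulVecE M (f₀ y)) ∧
      ∀ x, Ft₁ x = mulVecE M (F₁ x) := by
  obtain ⟨u₀, h0, hρ2, hpos⟩ := hρmax.exists_posDef_negHessian
  obtain ⟨T, a, b, hT₀, hT₁⟩ := exists_continuousLinearEquiv_of_location hρ.regularDensity
    hρt.regularDensity h0 hρ2 hpos hf₀ hft₀ hft₀_surj hF₁ h
  obtain ⟨M, hM⟩ := (Matrix.toEuclideanCLM (𝕜 := ℝ)).surjective (T : E p →L[ℝ] E p)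
  have hMT (u : E p) : mulVecE M u = T u := congr($hM u)
  have hM_det : IsUnit M.det := by
    have hM_lin : Matrix.toEuclideanLin M = (T.toLinearEquiv : E p →ₗ[ℝ] E p) :=
      LinearMap.ext hMT
    rw [← det_toEuclideanLin, hM_lin]
    exact T.toLinearEquiv.isUnit_det'
  have ha : a = 0 := by simpa [hf₀0, hft₀0] using (hT₀ y₀).symm
  have hρ_eq (u : E p) : ρ u = ρt (mulVecE M u + -b) * J y₀ := by
    obtain ⟨x, hx⟩ := hF₁ (-u)
    simpa [hx, hf₀0, hft₀0, hT₁, hMT, sub_eq_add_neg, add_comm] using h y₀ x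
  have hb : -b = 0 := hρ.eq_zero_of_affine hρt hM_det hρ_eq
  refine ⟨M, hρ.mul_transpose_eq_one_of_linear hρt hM_det (by simpa [hb] using hρ_eq), ?_, ?_⟩
  · simpa [hMT, ha] using hT₀
  · simpa [hMT, neg_eq_zero.1 hb] using hT₁

section ConjugateScale

variable {n : ℕ} {Q S : Matrix (Fin n) (Fin n) ℝ}

theorem posDef_of_isDiag (hS : S.IsDiag) (hS_pos : ∀ i, 0 < S i i) : S.PosDef := by
  rw [← hS.diagonal_diag]
  exact Matrix.PosDef.diagonal hS_pos

theorem posDef_conjugate_sq (hS : S.PosDef) (hQ : Q * Qᵀ = 1) : (Q * (S * S) * Qᵀ).PosDef := by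
  have hS_inj : Function.Injective (S *ᵥ ·) := Matrix.mulVec_injective_of_isUnit hS.isUnit
  have hQ_inj : Function.Injective (· ᵥ* Q) :=
    Matrix.vecMul_injective_of_isUnit (IsUnit.of_mul_eq_one _ hQ)
  have hSS : (S * S).PosDef := by
    simpa only [hS.isHermitian.eq] using Matrix.PosDef.conjTranspose_mul_self S hS_inj
  simpa using hSS.mul_mul_conjTranspose_same hQ_inj

/-- The skedastic matrix of the rotated model: the positive diagonal square root of `Q S² Qᵀ`,
meaningful when the latter is diagonal. -/
def conjugateScale (Q S : Matrix (Fin n) (Fin n) ℝ) : Matrix (Fin n) (Fin n) ℝ :=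
  diagonal fun i => √((Q * (S * S) * Qᵀ) i i)

theorem conjugateScale_apply_self_pos (hS : S.PosDef) (hQ : Q * Qᵀ = 1) (i : Fin n) :
    0 < conjugateScale Q S i i := by
  simpa [conjugateScale] using (posDef_conjugate_sq hS hQ).diag_pos

theorem posDef_conjugateScale (hS : S.PosDef) (hQ : Q * Qᵀ = 1) : (conjugateScale Q S).PosDef :=
  posDef_of_isDiag (isDiag_diagonal _) (conjugateScale_apply_self_pos hS hQ)

theorem conjugateScale_mul_self (hS : S.PosDef) (hQ : Q * Qᵀ = 1)
    (hdiag : (Q * (S * S) * Qᵀ).IsDiag) :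
    conjugateScale Q S * conjugateScale Q S = Q * (S * S) * Qᵀ := by
  rw [conjugateScale, diagonal_mul_diagonal]
  refine Eq.trans (congrArg diagonal (funext fun i => ?_)) hdiag.diagonal_diag
  exact Real.mul_self_sqrt (posDef_conjugate_sq hS hQ).diag_pos.le

open scoped MatrixOrder in
theorem transpose_mul_conjugateScale_mul (hS : S.PosDef) (hQ : Q * Qᵀ = 1)
    (hdiag : (Q * (S * S) * Qᵀ).IsDiag) : Qᵀ * conjugateScale Q S * Q = S := by
  have hQ' : Qᵀ * Q = 1 := mul_eq_one_comm.1 hQ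
  have hsq : (Qᵀ * conjugateScale Q S * Q) ^ 2 = S ^ 2 :=
    calc (Qᵀ * conjugateScale Q S * Q) ^ 2
        = Qᵀ * conjugateScale Q S * (Q * Qᵀ) * conjugateScale Q S * Q := by
          simp only [sq, mul_assoc]
      _ = Qᵀ * (conjugateScale Q S * conjugateScale Q S) * Q := by
          rw [hQ, mul_one]; simp only [mul_assoc]
      _ = (Qᵀ * Q) * (S * S) * (Qᵀ * Q) := by
          rw [conjugateScale_mul_self hS hQ hdiag]; simp only [mul_assoc]
      _ = S ^ 2 := by rw [hQ', one_mul, mul_one, sq]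
  have hpsd : (Qᵀ * conjugateScale Q S * Q).PosSemidef := by
    simpa using (posDef_conjugateScale hS hQ).posSemidef.conjTranspose_mul_mul_same Q
  exact (CFC.sq_eq_sq_iff _ _ hpsd.nonneg hS.posSemidef.nonneg).1 hsq

theorem transpose_mul_inv_conjugateScale_mul (hS : S.PosDef) (hQ : Q * Qᵀ = 1)
    (hdiag : (Q * (S * S) * Qᵀ).IsDiag) : Qᵀ * (conjugateScale Q S)⁻¹ * Q = S⁻¹ := by
  conv_rhs => rw [← transpose_mul_conjugateScale_mul hS hQ hdiag]
  rw [Matrix.mul_inv_rev, Matrix.mul_inv_rev, Matrix.inv_eq_right_inv hQ,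
    Matrix.inv_eq_left_inv hQ, ← mul_assoc]

theorem continuous_conjugateScale (Q : Matrix (Fin n) (Fin n) ℝ) :
    Continuous (conjugateScale Q) := by
  unfold conjugateScale
  fun_prop

end ConjugateScale

/- For a measure `ν` that is not s-finite, `Measure.prod` takes the junk value `0` when the measures
of the sections do not depend measurably on the base point. -/
theorem prod_eq_zero_or_forall_prod_prod {α β : Type*} [MeasurableSpace α] [MeasurableSpace β]
    (μ : Measure α) (ν : Measure β) :
    μ.prod ν = 0 ∨ ∀ s t, MeasurableSet s → MeasurableSet t → μ.prod ν (s ×ˢ t) = μ s * ν t := by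
  classical
  by_cases hν : AEMeasurable (fun x => ν.map (Prod.mk x)) μ
  · refine Or.inr fun s t hs ht => ?_
    rw [Measure.prod, Measure.bind_apply (hs.prod ht) hν]
    simp_rw [Measure.map_apply measurable_prodMk_left (hs.prod ht),
      Set.mk_preimage_prod_right_eq_if, measure_if]
    rw [lintegral_indicator hs, setLIntegral_const, mul_comm]
  · exact Or.inl (by rw [Measure.prod, Measure.bind, Measure.map_of_not_aemeasurable hν,
      Measure.join_zero])

theorem prod_eq_zero_or_ne_zero_of_mem_nhds {α β : Type*} [TopologicalSpace α]
    [MeasurableSpace α] [OpensMeasurableSpace α] [TopologicalSpace β] [MeasurableSpace β]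
    [OpensMeasurableSpace β] {μ : Measure α} {ν : Measure β} {a : α} {b : β}
    (hμ : ∀ U ∈ 𝓝 a, μ U ≠ 0) (hν : ∀ U ∈ 𝓝 b, ν U ≠ 0) :
    μ.prod ν = 0 ∨ ∀ U ∈ 𝓝 (a, b), μ.prod ν U ≠ 0 := by
  refine (prod_eq_zero_or_forall_prod_prod μ ν).imp_right fun hprod U hU hU0 => ?_
  obtain ⟨s, t, hs, has, ht, hbt, hst⟩ := mem_nhds_prod_iff'.1 hU
  have hst0 : μ s * ν t = 0 := by
    rw [← hprod s t hs.measurableSet ht.measurableSet]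
    exact measure_mono_null hst hU0
  exact (mul_ne_zero (hμ s (hs.mem_nhds has)) (hν t (ht.mem_nhds hbt))) hst0

/-- The density at `w = (ξ, ξ̄)` of the nonlinear SVAR `f₀ ξ = F₁ ξ̄ + S u` with noise density `ρ`:
`ξ` is the current value and `ξ̄` the conditioning variables. -/
def structuralDensity {p : ℕ} {X : Type*} (ρ : E p → ℝ) (S : Matrix (Fin p) (Fin p) ℝ)
    (f₀ : E p → E p) (F₁ : X → E p) (w : E p × X) : ℝ :=
  ρ (mulVecE S⁻¹ (f₀ w.1 - F₁ w.2)) * |S⁻¹.det * (fderiv ℝ f₀ w.1).det|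

section StructuralDensity

variable {p : ℕ} {X : Type*} {ρ ρt : E p → ℝ} {S St : Matrix (Fin p) (Fin p) ℝ}
  {f₀ ft₀ : E p → E p} {F₁ Ft₁ : X → E p}

theorem eq_mulVecE_of_mulVecE_inv_eq {M : Matrix (Fin p) (Fin p) ℝ} (hSt : IsUnit St.det)
    {x y : E p} (h : mulVecE St⁻¹ y = mulVecE M (mulVecE S⁻¹ x)) :
    y = mulVecE (St * M * S⁻¹) x := by
  rw [mulVecE_mul, mulVecE_mul, ← h, mulVecE_mulVecE_of_mul_eq_one (St.mul_nonsing_inv hSt)]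

theorem mul_transpose_eq_conjugate {M : Matrix (Fin p) (Fin p) ℝ} (hS : IsUnit S.det)
    (hM : M * Mᵀ = 1) : St * Stᵀ = St * M * S⁻¹ * (S * Sᵀ) * (St * M * S⁻¹)ᵀ := by
  have hcancel : St * M * S⁻¹ * S = St * M := S.nonsing_inv_mul_cancel_right _ hS
  calc St * Stᵀ = St * (M * Mᵀ) * Stᵀ := by rw [hM, mul_one]
    _ = St * M * (St * M)ᵀ := by rw [transpose_mul]; simp only [mul_assoc]
    _ = St * M * S⁻¹ * S * (St * M * S⁻¹ * S)ᵀ := by rw [hcancel]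
    _ = St * M * S⁻¹ * (S * Sᵀ) * (St * M * S⁻¹)ᵀ := by
      rw [transpose_mul (St * M * S⁻¹) S]; simp only [mul_assoc]

theorem exists_matrix_of_structuralDensity_ae_eq [TopologicalSpace X] [MeasurableSpace X]
    {ν : Measure X} [ν.IsOpenPosMeasure] [SFinite ν] (hρ : AdmissibleDensity ρ)
    (hρmax : LocalMaxCondition ρ) (hρt : AdmissibleDensity ρt) (hS : IsUnit S.det)
    (hSt : IsUnit St.det) (hf₀ : IsHomeomorph f₀) (hf₀0 : f₀ 0 = 0)
    (hf₀det : ∀ᵐ z, (fderiv ℝ f₀ z).det ≠ 0) (hft₀ : Continuous ft₀)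
    (hft₀_surj : Function.Surjective ft₀) (hft₀0 : ft₀ 0 = 0) (hF₁ : Continuous F₁)
    (hF₁_surj : Function.Surjective F₁) (hFt₁ : Continuous Ft₁)
    (h : structuralDensity ρ S f₀ F₁ =ᵐ[volume.prod ν] structuralDensity ρt St ft₀ Ft₁) :
    ∃ G : Matrix (Fin p) (Fin p) ℝ, (∀ z, ft₀ z = mulVecE G (f₀ z)) ∧
      (∀ x, Ft₁ x = mulVecE G (F₁ x)) ∧ St * Stᵀ = G * (S * Sᵀ) * Gᵀ := by
  have : Nonempty X := (hF₁_surj 0).nonempty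
  have hS' : IsUnit S⁻¹.det := S.isUnit_nonsing_inv_det hS
  have hSt' : IsUnit St⁻¹.det := St.isUnit_nonsing_inv_det hSt
  have hρ_cont := hρ.1.continuous
  have hρt_cont := hρt.1.continuous
  have hf₀_cont := hf₀.continuous
  obtain ⟨J, hJ⟩ := exists_factor_of_ae_mul_eq_mul
    (α := fun y x => ρ (mulVecE S⁻¹ (f₀ y - F₁ x)))
    (β := fun y x => ρt (mulVecE St⁻¹ (ft₀ y - Ft₁ x)))
    (D := fun y => |S⁻¹.det * (fderiv ℝ f₀ y).det|)
    (Dt := fun y => |St⁻¹.det * (fderiv ℝ ft₀ y).det|)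
    (fun y => by fun_prop) (fun x => by fun_prop) (fun y => by fun_prop) (fun x => by fun_prop)
    (fun y x => (hρt.2.1 _).ne')
    (hf₀det.mono fun y hy => abs_ne_zero.2 (mul_ne_zero hS'.ne_zero hy)) h
  obtain ⟨M, hM, hM₀, hM₁⟩ := exists_orthogonal_of_location hρ hρmax hρt (y₀ := 0)
    ((isHomeomorph_mulVecE hS').comp hf₀) (by simp [hf₀0, mulVecE_zero])
    ((continuous_mulVecE St⁻¹).comp hft₀) ((isHomeomorph_mulVecE hSt').surjective.comp hft₀_surj)
    (by simp [hft₀0, mulVecE_zero]) ((isHomeomorph_mulVecE hS').surjective.comp hF₁_surj)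
    (fun y x => by simpa only [mulVecE_sub, Function.comp_apply] using hJ y x)
  exact ⟨St * M * S⁻¹, fun z => eq_mulVecE_of_mulVecE_inv_eq hSt (hM₀ z),
    fun x => eq_mulVecE_of_mulVecE_inv_eq hSt (hM₁ x), mul_transpose_eq_conjugate hS hM⟩

theorem structuralDensity_conjugateScale {Q : Matrix (Fin p) (Fin p) ℝ} (hQ : Q * Qᵀ = 1)
    (hS : S.PosDef) (hdiag : (Q * (S * S) * Qᵀ).IsDiag) (ρ : E p → ℝ) (f₀ : E p → E p)
    (F₁ : X → E p) :
    structuralDensity (fun u => ρ (mulVecE Qᵀ u)) (conjugateScale Q S)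
      (fun z => mulVecE Q (f₀ z)) (fun x => mulVecE Q (F₁ x)) = structuralDensity ρ S f₀ F₁ := by
  have hinv : Qᵀ * ((conjugateScale Q S)⁻¹ * Q) = S⁻¹ := by
    rw [← mul_assoc, transpose_mul_inv_conjugateScale_mul hS hQ hdiag]
  have hdet : |(conjugateScale Q S)⁻¹.det| = |S⁻¹.det| := by
    simp [← hinv, abs_mul, abs_det_eq_one hQ]
  ext w
  simp only [structuralDensity, det_fderiv_mulVecE_comp (isUnit_det_of_right_inverse hQ), abs_mul,
    abs_det_eq_one hQ, one_mul, hdet, ← mulVecE_sub, ← mulVecE_mul, hinv]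

end StructuralDensity

section Identification

variable {p d₂ dv : ℕ} {σ σt : E d₂ × E dv → Matrix (Fin p) (Fin p) ℝ} {q₀ : E d₂ × E dv}

theorem eq_of_forall_mulVecE_comp_eq {f : E p → E p} (hf : Function.Surjective f)
    {A B : Matrix (Fin p) (Fin p) ℝ} (h : ∀ z, mulVecE A (f z) = mulVecE B (f z)) : A = B :=
  mulVecE_injective (hf.injective_comp_right (funext h))

namespace SkedasticFn2

theorem posDef (hσ : SkedasticFn2 σ q₀) (q : E d₂ × E dv) : (σ q).PosDef :=
  posDef_of_isDiag (hσ.1 q) (hσ.2.1 q)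

theorem isUnit_det (hσ : SkedasticFn2 σ q₀) (q : E d₂ × E dv) : IsUnit (σ q).det :=
  (σ q).isUnit_iff_isUnit_det.1 (hσ.posDef q).isUnit

theorem isDiag_mul_self (hσ : SkedasticFn2 σ q₀) (q : E d₂ × E dv) : (σ q * σ q).IsDiag := by
  rw [← (hσ.1 q).diagonal_diag, diagonal_mul_diagonal]
  exact isDiag_diagonal _

theorem conjugateScale_comp (hσ : SkedasticFn2 σ q₀) {Q : Matrix (Fin p) (Fin p) ℝ}
    (hQ : Q * Qᵀ = 1) : SkedasticFn2 (fun q => conjugateScale Q (σ q)) q₀ := by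
  refine ⟨fun q => isDiag_diagonal _, fun q => conjugateScale_apply_self_pos (hσ.posDef q) hQ, ?_,
    (continuous_conjugateScale Q).continuousAt.comp hσ.2.2.2⟩
  simp [hσ.2.2.1, conjugateScale, hQ]

theorem mul_transpose_eq_one_of_frequently (hσ : SkedasticFn2 σ q₀) (hσt : SkedasticFn2 σt q₀)
    {Q : Matrix (Fin p) (Fin p) ℝ}
    (h : ∃ᶠ q in 𝓝 q₀, σt q * σt q = Q * (σ q * σ q) * Qᵀ) : Q * Qᵀ = 1 := by
  have hlim := hσ.2.2.2.tendsto
  have hlimt := hσt.2.2.2.tendsto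
  have := tendsto_nhds_unique_of_frequently_eq (hlimt.mul hlimt)
    (((hlim.mul hlim).const_mul Q).mul_const Qᵀ) h
  simpa [hσ.2.2.1, hσt.2.2.1] using this.symm

theorem exists_orthogonal_of_ae_exists_matrix (hσ : SkedasticFn2 σ q₀)
    (hσt : SkedasticFn2 σt q₀) {π : Measure (E d₂ × E dv)}
    (hπ : π = 0 ∨ ∀ U ∈ 𝓝 q₀, π U ≠ 0) {f₀ ft₀ : E p → E p} (hf₀ : Function.Surjective f₀)
    {P : E d₂ × E dv → Matrix (Fin p) (Fin p) ℝ → Prop}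
    (h : ∀ᵐ q ∂π, ∃ G, (∀ z, ft₀ z = mulVecE G (f₀ z)) ∧ P q G ∧
      σt q * σt q = G * (σ q * σ q) * Gᵀ) :
    ∃ Q : Matrix (Fin p) (Fin p) ℝ, Q * Qᵀ = 1 ∧ ∀ᵐ q ∂π, (∀ z, ft₀ z = mulVecE Q (f₀ z)) ∧
      P q Q ∧ σt q * σt q = Q * (σ q * σ q) * Qᵀ := by
  rcases hπ with rfl | hπ
  · exact ⟨1, by simp, by simp⟩
  have hfreq {R : E d₂ × E dv → Prop} (hR : ∀ᵐ q ∂π, R q) : ∃ᶠ q in 𝓝 q₀, R q :=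
    fun hnot => hπ _ hnot (ae_iff.1 hR)
  obtain ⟨_, Q, hQ, -⟩ := (hfreq h).exists
  have hQ_ae : ∀ᵐ q ∂π, P q Q ∧ σt q * σt q = Q * (σ q * σ q) * Qᵀ := by
    filter_upwards [h] with q ⟨G, hG, hPG⟩
    rwa [eq_of_forall_mulVecE_comp_eq hf₀ fun z => (hQ z).symm.trans (hG z)]
  exact ⟨Q, hσ.mul_transpose_eq_one_of_frequently hσt ((hfreq hQ_ae).mono fun _ => And.right),
    hQ_ae.mono fun _ => And.intro hQ⟩

end SkedasticFn2

theorem svar_heteroskedastic_identification_general {X : Type*} [TopologicalSpace X]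
    [MeasurableSpace X] {ν : Measure X} [ν.IsOpenPosMeasure] [SFinite ν]
    (V : Set (E dv)) (μv : Measure (E dv)) (hμV : μv Vᶜ = 0) (zstar : E d₂) (vstar : E dv)
    (hμvstar : ∀ U : Set (E dv), IsOpen U → vstar ∈ U → 0 < μv U)
    (f₀ : E p → E p) (hf₀ : IsHomeomorph f₀) (hf₀0 : f₀ 0 = 0)
    (hf₀det : ∀ᵐ z, (fderiv ℝ f₀ z).det ≠ 0) (f₁ : X → E d₂ → E dv → E p)
    (hf₁ : ∀ z2, ∀ v ∈ V, Continuous fun x => f₁ x z2 v)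
    (hf₁surj : ∀ z2, ∀ v ∈ V, Function.Surjective fun x => f₁ x z2 v)
    (ρ : E p → ℝ) (hρ : AdmissibleDensity ρ) (hρmax : LocalMaxCondition ρ)
    (σ : E d₂ × E dv → Matrix (Fin p) (Fin p) ℝ) (hσ : SkedasticFn2 σ (zstar, vstar))
    (ft₀ : E p → E p) (hft₀ : Continuous ft₀) (hft₀surj : Function.Surjective ft₀)
    (hft₀0 : ft₀ 0 = 0) (ft₁ : X → E d₂ → E dv → E p)
    (hft₁ : ∀ z2, ∀ v ∈ V, Continuous fun x => ft₁ x z2 v) :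
    ((∃ (σt : E d₂ × E dv → Matrix (Fin p) (Fin p) ℝ) (ρt : E p → ℝ),
        SkedasticFn2 σt (zstar, vstar) ∧ AdmissibleDensity ρt ∧
        ∀ᵐ q : E d₂ × E dv ∂((volume : Measure (E d₂)).prod μv),
          structuralDensity ρ (σ q) f₀ (f₁ · q.1 q.2) =ᵐ[volume.prod ν]
            structuralDensity ρt (σt q) ft₀ (ft₁ · q.1 q.2))
      ↔ ∃ Q : Matrix (Fin p) (Fin p) ℝ, Q * Qᵀ = 1 ∧
          ∀ᵐ q : E d₂ × E dv ∂((volume : Measure (E d₂)).prod μv),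
            (∀ z, ft₀ z = mulVecE Q (f₀ z)) ∧
            (∀ x, ft₁ x q.1 q.2 = mulVecE Q (f₁ x q.1 q.2)) ∧
            (Q * (σ q * σ q) * Qᵀ).IsDiag)
    ∧
    (∀ (σt : E d₂ × E dv → Matrix (Fin p) (Fin p) ℝ) (ρt : E p → ℝ)
        (Q : Matrix (Fin p) (Fin p) ℝ),
      SkedasticFn2 σt (zstar, vstar) → AdmissibleDensity ρt →
      (∀ᵐ q : E d₂ × E dv ∂((volume : Measure (E d₂)).prod μv),
        structuralDensity ρ (σ q) f₀ (f₁ · q.1 q.2) =ᵐ[volume.prod ν]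
          structuralDensity ρt (σt q) ft₀ (ft₁ · q.1 q.2)) →
      Q * Qᵀ = 1 →
      (∀ᵐ q : E d₂ × E dv ∂((volume : Measure (E d₂)).prod μv),
        (∀ z, ft₀ z = mulVecE Q (f₀ z)) ∧
        (∀ x, ft₁ x q.1 q.2 = mulVecE Q (f₁ x q.1 q.2)) ∧
        (Q * (σ q * σ q) * Qᵀ).IsDiag) →
      ∀ᵐ q : E d₂ × E dv ∂((volume : Measure (E d₂)).prod μv),
        σt q * σt q = Q * (σ q * σ q) * Qᵀ) := by
  have hV : ∀ᵐ q ∂(volume : Measure (E d₂)).prod μv, q.2 ∈ V :=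
    Measure.quasiMeasurePreserving_snd.ae (mem_ae_iff.2 hμV)
  have hlink {σt ρt} (hσt : SkedasticFn2 σt (zstar, vstar)) (hρt : AdmissibleDensity ρt)
      (h : ∀ᵐ q ∂(volume : Measure (E d₂)).prod μv,
        structuralDensity ρ (σ q) f₀ (f₁ · q.1 q.2) =ᵐ[volume.prod ν]
          structuralDensity ρt (σt q) ft₀ (ft₁ · q.1 q.2)) :
      ∀ᵐ q ∂(volume : Measure (E d₂)).prod μv, ∃ G, (∀ z, ft₀ z = mulVecE G (f₀ z)) ∧
        (∀ x, ft₁ x q.1 q.2 = mulVecE G (f₁ x q.1 q.2)) ∧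
        σt q * σt q = G * (σ q * σ q) * Gᵀ := by
    filter_upwards [hV, h] with q hqV hq
    simpa only [(hσ.1 q).isSymm.eq, (hσt.1 q).isSymm.eq] using
      exists_matrix_of_structuralDensity_ae_eq hρ hρmax hρt (hσ.isUnit_det q) (hσt.isUnit_det q)
        hf₀ hf₀0 hf₀det hft₀ hft₀surj hft₀0 (hf₁ q.1 q.2 hqV) (hf₁surj q.1 q.2 hqV)
        (hft₁ q.1 q.2 hqV) hq
  have hπ : (volume : Measure (E d₂)).prod μv = 0 ∨
      ∀ U ∈ 𝓝 (zstar, vstar), (volume : Measure (E d₂)).prod μv U ≠ 0 := by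
    refine prod_eq_zero_or_ne_zero_of_mem_nhds
      (fun U hU => (Measure.measure_pos_of_mem_nhds _ hU).ne') fun U hU => ?_
    exact ((hμvstar _ isOpen_interior (mem_interior_iff_mem_nhds.2 hU)).trans_le
      (measure_mono interior_subset)).ne'
  refine ⟨⟨?_, ?_⟩, ?_⟩
  · rintro ⟨σt, ρt, hσt, hρt, h⟩
    obtain ⟨Q, hQ, hQ_ae⟩ := hσ.exists_orthogonal_of_ae_exists_matrix hσt hπ hf₀.surjective
      (hlink hσt hρt h)
    refine ⟨Q, hQ, hQ_ae.mono fun q hq => ⟨hq.1, hq.2.1, ?_⟩⟩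
    exact hq.2.2 ▸ hσt.isDiag_mul_self q
  · rintro ⟨Q, hQ, h⟩
    refine ⟨_, _, hσ.conjugateScale_comp hQ, hρ.comp_mulVecE_transpose hQ, ?_⟩
    filter_upwards [h] with q ⟨hq₀, hq₁, hdiag⟩
    rw [funext hq₀, funext hq₁, structuralDensity_conjugateScale hQ (hσ.posDef q) hdiag]
  · intro σt ρt Q hσt hρt h _ hQ_ae
    filter_upwards [hlink hσt hρt h, hQ_ae] with q ⟨G, hG, _, hsq⟩ hq
    rwa [eq_of_forall_mulVecE_comp_eq hf₀.surjective fun z => (hq.1 z).symm.trans (hG z)]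

end Identification

theorem isHomeomorph_of_invFun {X Y : Type*} [TopologicalSpace X] [TopologicalSpace Y] [Nonempty X]
    {f : X → Y} (hf : Function.Bijective f) (hf_cont : Continuous f)
    (hf_inv : Continuous (Function.invFun f)) : IsHomeomorph f :=
  isHomeomorph_iff_exists_inverse.2 ⟨hf_cont, Function.invFun f,
    Function.leftInverse_invFun hf.1, Function.rightInverse_invFun hf.2, hf_inv⟩

/-- **Identification of the extended (heteroskedastic, endogenously nonlinear) SVAR**
(Theorem `thm:svarhetero`), stated as the equivalence together with the `moreover` clause
identifying `σ̃²`. -/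
theorem svar_heteroskedastic_identification
    (p d₁ d₂ dv : ℕ) (hp : 1 ≤ p) (hd₁ : 1 ≤ d₁) (hd₂ : 1 ≤ d₂) (hdv : 1 ≤ dv)
    (V : Set (E dv)) (μv : Measure (E dv)) (hμV : μv Vᶜ = 0)
    (zstar : E d₂) (vstar : E dv) (hvstar : vstar ∈ V)
    (hμvstar : ∀ U : Set (E dv), IsOpen U → vstar ∈ U → 0 < μv U)
    (f₀ : E p → E p) (hf₀lip : LocallyLipschitz f₀) (hf₀bij : Function.Bijective f₀)
    (hf₀0 : f₀ 0 = 0) (hf₀inv : LocallyLipschitz (Function.invFun f₀))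
    (hf₀det : ∀ᵐ z : E p, DifferentiableAt ℝ f₀ z ∧ (fderiv ℝ f₀ z).det ≠ 0)
    (f₁ : E d₁ → E d₂ → E dv → E p)
    (hf₁lip : ∀ (z2 : E d₂), ∀ v ∈ V, LocallyLipschitz (fun z1 => f₁ z1 z2 v))
    (hf₁surj : ∀ (z2 : E d₂), ∀ v ∈ V, Function.Surjective (fun z1 => f₁ z1 z2 v))
    (hf₁rank : ∀ (z2 : E d₂), ∀ v ∈ V, ∀ᵐ z1 : E d₁,
      DifferentiableAt ℝ (fun z1' => f₁ z1' z2 v) z1 ∧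
      LinearMap.rank (fderiv ℝ (fun z1' => f₁ z1' z2 v) z1).toLinearMap = (p : Cardinal))
    (ρ : E p → ℝ) (hρ : AdmissibleDensity ρ) (hρmax : LocalMaxCondition ρ)
    (σ : E d₂ × E dv → Matrix (Fin p) (Fin p) ℝ) (hσ : SkedasticFn2 σ (zstar, vstar))
    (ft₀ : E p → E p) (hft₀lip : LocallyLipschitz ft₀) (hft₀bij : Function.Bijective ft₀)
    (hft₀0 : ft₀ 0 = 0)
    (hft₀det : ∀ᵐ z : E p, DifferentiableAt ℝ ft₀ z ∧ (fderiv ℝ ft₀ z).det ≠ 0)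
    (ft₁ : E d₁ → E d₂ → E dv → E p)
    (hft₁lip : ∀ (z2 : E d₂) (v : E dv), LocallyLipschitz (fun z1 => ft₁ z1 z2 v)) :
    ((∃ (σt : E d₂ × E dv → Matrix (Fin p) (Fin p) ℝ) (ρt : E p → ℝ),
        SkedasticFn2 σt (zstar, vstar) ∧ AdmissibleDensity ρt ∧
        ∀ᵐ q : E d₂ × E dv ∂((volume : Measure (E d₂)).prod μv),
          ∀ᵐ w : E p × E d₁,
            ρ (mulVecE (σ q)⁻¹ (f₀ w.1 - f₁ w.2 q.1 q.2))
                * |(σ q)⁻¹.det * (fderiv ℝ f₀ w.1).det|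
              = ρt (mulVecE (σt q)⁻¹ (ft₀ w.1 - ft₁ w.2 q.1 q.2))
                  * |(σt q)⁻¹.det * (fderiv ℝ ft₀ w.1).det|)
      ↔ ∃ Q : Matrix (Fin p) (Fin p) ℝ, Q * Qᵀ = 1 ∧
          ∀ᵐ q : E d₂ × E dv ∂((volume : Measure (E d₂)).prod μv),
            (∀ z : E p, ft₀ z = mulVecE Q (f₀ z)) ∧
            (∀ z1 : E d₁, ft₁ z1 q.1 q.2 = mulVecE Q (f₁ z1 q.1 q.2)) ∧
            (Q * (σ q * σ q) * Qᵀ).IsDiag)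
    ∧
    (∀ (σt : E d₂ × E dv → Matrix (Fin p) (Fin p) ℝ) (ρt : E p → ℝ)
        (Q : Matrix (Fin p) (Fin p) ℝ),
      SkedasticFn2 σt (zstar, vstar) → AdmissibleDensity ρt →
      (∀ᵐ q : E d₂ × E dv ∂((volume : Measure (E d₂)).prod μv),
        ∀ᵐ w : E p × E d₁,
          ρ (mulVecE (σ q)⁻¹ (f₀ w.1 - f₁ w.2 q.1 q.2))
              * |(σ q)⁻¹.det * (fderiv ℝ f₀ w.1).det|
            = ρt (mulVecE (σt q)⁻¹ (ft₀ w.1 - ft₁ w.2 q.1 q.2))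
                * |(σt q)⁻¹.det * (fderiv ℝ ft₀ w.1).det|) →
      Q * Qᵀ = 1 →
      (∀ᵐ q : E d₂ × E dv ∂((volume : Measure (E d₂)).prod μv),
        (∀ z : E p, ft₀ z = mulVecE Q (f₀ z)) ∧
        (∀ z1 : E d₁, ft₁ z1 q.1 q.2 = mulVecE Q (f₁ z1 q.1 q.2)) ∧
        (Q * (σ q * σ q) * Qᵀ).IsDiag) →
      ∀ᵐ q : E d₂ × E dv ∂((volume : Measure (E d₂)).prod μv),
        σt q * σt q = Q * (σ q * σ q) * Qᵀ) :=
  svar_heteroskedastic_identification_general V μv hμV zstar vstar hμvstar f₀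
    (isHomeomorph_of_invFun hf₀bij hf₀lip.continuous hf₀inv.continuous) hf₀0
    (hf₀det.mono fun _ => And.right) f₁ (fun z2 v hv => (hf₁lip z2 v hv).continuous) hf₁surj ρ hρ
    hρmax σ hσ ft₀ hft₀lip.continuous hft₀bij.2 hft₀0 ft₁
    fun z2 v _ => (hft₁lip z2 v).continuous
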